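/- Fix θ ∈ [1/4, 1) and β with 0 < β < min{θ, 1/2}. There is a constant C > 0 depending only on θ and β with the following property. Let Y₁ and Y₂ each be as in the context, both satisfying the well-stretched condition with constant λ > 0 and ‖Y₁‖_{Ḣ^{2+θ}(𝕋)}, ‖Y₂‖_{Ḣ^{2+θ}(𝕋)} < ∞, and let g_{Y₁} and g_{Y₂} be as in the context. Then ‖g_{Y₁} − g_{Y₂}‖_{L²(𝕋)} ≤ C λ^{−2} ( ‖Y₁‖_{Ḣ^{2+θ}(𝕋)} + ‖Y₂‖_{Ḣ^{2+θ}(𝕋)} )² ‖Y₁ − Y₂‖_{Ḣ^{1/2−β}(𝕋)}. -/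

import Mathlib

open MeasureTheory Real Filter Topology
open scoped RealInnerProductSpace ENNReal

noncomputable section

abbrev E2 : Type := EuclideanSpace ℝ (Fin 2)

/-- Squared modulus of the `k`-th Fourier coefficient
`ĝ_k = ∫_{-π}^{π} g(s) e^{-iks} ds` (componentwise complexified). -/
def coefSq (g : ℝ → E2) (k : ℤ) : ℝ :=
  ∑ j : Fin 2,
    Complex.normSq (∫ s in (-π)..π, (g s j : ℂ) * Complex.exp (-Complex.I * (k : ℂ) * (s : ℂ)))

/-- Summand of the homogeneous Sobolev seminorm: `|k|^{2σ} |ĝ_k|²` for `k ≠ 0`. -/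
def sobSummand (σ : ℝ) (g : ℝ → E2) (k : ℤ) : ℝ :=
  if k = 0 then 0 else (|k| : ℝ) ^ (2 * σ) * coefSq g k

/-- The homogeneous Sobolev seminorm `‖g‖_{Ḣ^σ(𝕋)} = (Σ_{k≠0} |k|^{2σ} |ĝ_k|²)^{1/2}`. -/
def sobNorm (σ : ℝ) (g : ℝ → E2) : ℝ := Real.sqrt (∑' k : ℤ, sobSummand σ g k)

/-- The `L²(𝕋)` norm (vector-valued). -/
def normL2v (g : ℝ → E2) : ℝ := Real.sqrt (∫ s in (-π)..π, ‖g s‖ ^ 2)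

/-- The nonlinear remainder `g_Y` in the contour dynamic equation (Hookean case):
`g_Y(s) = (1/4π) ∫_{−π}^{π} [ (−|Y'(s+τ)|²/|L|² + 2(L·Y'(s+τ))²/|L|⁴ − 1) L/τ
+ (1/τ − τ/(4 sin²(τ/2))) L ] dτ` with `L = (Y(s+τ) − Y(s))/τ`. -/
def gY (Y Y' : ℝ → E2) (s : ℝ) : E2 :=
  ((4 * π)⁻¹ : ℝ) • ∫ τ in (-π)..π,
    (((-‖Y' (s + τ)‖ ^ 2 / ‖τ⁻¹ • (Y (s + τ) - Y s)‖ ^ 2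
          + 2 * (⟪τ⁻¹ • (Y (s + τ) - Y s), Y' (s + τ)⟫) ^ 2 /
              ‖τ⁻¹ • (Y (s + τ) - Y s)‖ ^ 4
          - 1) / τ
        + (1 / τ - τ / (4 * Real.sin (τ / 2) ^ 2))) • (τ⁻¹ • (Y (s + τ) - Y s)))

open scoped ComplexConjugate

/-- Fourier coefficient of a complex valued function. -/
def fc (f : ℝ → ℂ) (k : ℤ) : ℂ :=
  ∫ s in (-π)..π, f s * Complex.exp (-Complex.I * (k : ℂ) * (s : ℂ))

lemma fc_eq (f : ℝ → ℂ) (k : ℤ) :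
    fc f k = (2 * π : ℝ) • fourierCoeffOn (show -π < π by linarith [pi_pos]) f k := by
  rw [fourierCoeffOn_eq_integral, smul_smul]
  have h1 : (2 * π) * (1 / (π - -π)) = 1 := by
    have := pi_pos; field_simp; ring
  rw [h1, one_smul]
  unfold fc
  refine intervalIntegral.integral_congr fun x _ => ?_
  simp only [fourier_coe_apply, smul_eq_mul]
  rw [mul_comm]
  congr 2
  have : (π : ℂ) ≠ 0 := by exact_mod_cast pi_ne_zero
  push_cast
  field_simp
  ring

lemma parseval {f : ℝ → ℂ} (hf : Continuous f) :
    HasSum (fun k => ‖fc f k‖ ^ 2) (2 * π * ∫ s in (-π)..π, ‖f s‖ ^ 2) := by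
  have hab : -π < π := by linarith [pi_pos]
  have hL2 : MemLp f 2 (volume.restrict (Set.Ioc (-π) π)) := by
    obtain ⟨K, hK⟩ := isCompact_Icc.exists_bound_of_continuousOn (s := Set.Icc (-π) π)
      hf.continuousOn
    refine MemLp.of_bound hf.aestronglyMeasurable K ?_
    rw [ae_restrict_iff' measurableSet_Ioc]
    exact Eventually.of_forall fun x hx => hK x ⟨hx.1.le, hx.2⟩
  have h := (hasSum_sq_fourierCoeffOn hab hL2).mul_left ((2 * π) ^ 2)
  have e1 : (fun k => ‖fc f k‖ ^ 2) = fun i => (2 * π) ^ 2 * ‖fourierCoeffOn hab f i‖ ^ 2 := by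
    ext k
    rw [fc_eq, norm_smul, mul_pow, Real.norm_eq_abs, sq_abs]
  have e2 : 2 * π * ∫ (s : ℝ) in -π..π, ‖f s‖ ^ 2 =
      (2 * π) ^ 2 * (π - -π)⁻¹ • ∫ (x : ℝ) in -π..π, ‖f x‖ ^ 2 := by
    have := pi_pos
    rw [smul_eq_mul]; field_simp; ring
  rw [e1, e2]
  exact h

lemma fc_add {f g : ℝ → ℂ} (hf : Continuous f) (hg : Continuous g) (k : ℤ) :
    fc (fun s => f s + g s) k = fc f k + fc g k := by
  unfold fc
  rw [← intervalIntegral.integral_add]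
  · simp_rw [add_mul]
  all_goals exact Continuous.intervalIntegrable (by fun_prop) _ _

lemma fc_sub {f g : ℝ → ℂ} (hf : Continuous f) (hg : Continuous g) (k : ℤ) :
    fc (fun s => f s - g s) k = fc f k - fc g k := by
  unfold fc
  rw [← intervalIntegral.integral_sub]
  · simp_rw [sub_mul]
  all_goals exact Continuous.intervalIntegrable (by fun_prop) _ _

lemma fc_mul_left (c : ℂ) (f : ℝ → ℂ) (k : ℤ) :
    fc (fun s => c * f s) k = c * fc f k := by
  unfold fc
  rw [← intervalIntegral.integral_const_mul]
  simp_rw [mul_assoc]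

/-- Polarised Parseval, as an inequality. -/
lemma parseval_polar {p q : ℝ → ℂ} (hp : Continuous p) (hq : Continuous q)
    (hs : Summable fun k => ‖fc p k‖ * ‖fc q k‖) :
    2 * π * ‖∫ s in (-π)..π, p s * conj (q s)‖ ≤ ∑' k, ‖fc p k‖ * ‖fc q k‖ := by
  set I := ∫ s in (-π)..π, p s * conj (q s) with hI
  by_cases hI0 : I = 0
  · rw [hI0]; simp only [norm_zero, mul_zero]; exact tsum_nonneg fun k => by positivity
  set c : ℂ := I / ‖I‖ with hc
  have hIn : (‖I‖ : ℂ) ≠ 0 := by simpa using hI0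
  have hcn : ‖c‖ = 1 := by
    rw [hc, norm_div]; simp [hI0]
  have key : ∀ a b : ℂ, ‖a + c * b‖ ^ 2 - ‖a - c * b‖ ^ 2 = 4 * (conj c * (a * conj b)).re := by
    intro a b
    rw [← Complex.normSq_eq_norm_sq, ← Complex.normSq_eq_norm_sq]
    simp only [Complex.normSq_apply, Complex.add_re, Complex.add_im, Complex.sub_re, Complex.sub_im,
      Complex.mul_re, Complex.mul_im, Complex.conj_re, Complex.conj_im]
    ring
  have h1 := parseval (f := fun s => p s + c * q s) (by fun_prop)
  have h2 := parseval (f := fun s => p s - c * q s) (by fun_prop)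
  have h3 := h1.sub h2
  have e1 : 2 * π * ∫ s in (-π)..π, ‖p s + c * q s‖ ^ 2 =
      2 * π * (∫ s in (-π)..π, ‖p s - c * q s‖ ^ 2) + 2 * π * (4 * ‖I‖) := by
    rw [← mul_add]
    congr 1
    rw [← sub_eq_iff_eq_add', ← intervalIntegral.integral_sub]
    · simp_rw [key]
      rw [intervalIntegral.integral_const_mul]
      congr 1
      have : (∫ s in (-π)..π, (conj c * (p s * conj (q s))).re) =
          (∫ s in (-π)..π, (conj c * (p s * conj (q s)))).re := by
        have := Complex.reCLM.intervalIntegral_comp_comm (μ := volume) (a := -π) (b := π)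
          (f := fun s => conj c * (p s * conj (q s)))
          (Continuous.intervalIntegrable (by fun_prop) _ _)
        simpa using this
      rw [this, intervalIntegral.integral_const_mul, ← hI, hc]
      rw [map_div₀, Complex.conj_ofReal, div_mul_eq_mul_div, mul_comm, Complex.mul_conj,
        Complex.normSq_eq_norm_sq]
      rw [← Complex.ofReal_div, Complex.ofReal_re]
      have : ‖I‖ ≠ 0 := by simpa using hI0
      field_simp
    all_goals exact Continuous.intervalIntegrable (by fun_prop) _ _
  rw [e1] at h3
  have h4 := hasSum_le (g := fun k => 4 * (‖fc p k‖ * ‖fc q k‖)) (fun k => ?_) h3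
    (hs.hasSum.mul_left 4)
  · linarith
  · rw [fc_add hp (by fun_prop), fc_sub hp (by fun_prop), fc_mul_left, key]
    have : (conj c * (fc p k * conj (fc q k))).re ≤ ‖fc p k‖ * ‖fc q k‖ := by
      refine (Complex.re_le_norm _).trans ?_
      simp [hcn]
    linarith

lemma fc_mul_le {f g : ℝ → ℂ} (hf : Continuous f) (hg : Continuous g) (n : ℤ)
    (hs : Summable fun k => ‖fc f k‖ * ‖fc g (n - k)‖) :
    2 * π * ‖fc (fun s => f s * g s) n‖ ≤ ∑' k, ‖fc f k‖ * ‖fc g (n - k)‖ := by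
  set q : ℝ → ℂ := fun s => conj (g s * Complex.exp (-Complex.I * (n : ℂ) * (s : ℂ))) with hq
  have hqc : ∀ k, ‖fc q k‖ = ‖fc g (n - k)‖ := by
    intro k
    have : fc q k = conj (fc g (n - k)) := by
      unfold fc
      rw [intervalIntegral.integral_of_le (by linarith [pi_pos]),
        intervalIntegral.integral_of_le (by linarith [pi_pos]), ← integral_conj]
      refine integral_congr_ae (Eventually.of_forall fun s => ?_)
      simp only [hq, map_mul, ← Complex.exp_conj, mul_assoc, ← Complex.exp_add]
      congr 2
      simp
      ring
    rw [this, Complex.norm_conj]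
  have hqcont : Continuous q := by
    simp only [hq]; fun_prop
  have := parseval_polar hf hqcont (by simpa only [hqc] using hs)
  simp only [hqc] at this
  refine le_trans (le_of_eq ?_) this
  unfold fc
  simp only [hq, Complex.conj_conj, mul_assoc]

/-- The summand of the squared homogeneous Sobolev norm. -/
def ws (σ : ℝ) (f : ℝ → ℂ) (k : ℤ) : ℝ :=
  if k = 0 then 0 else |(k : ℝ)| ^ (2 * σ) * ‖fc f k‖ ^ 2

lemma ws_nonneg (σ : ℝ) (f : ℝ → ℂ) (k : ℤ) : 0 ≤ ws σ f k := by
  unfold ws; split_ifs <;> positivity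

/-- zeta-type weights -/
def zw (σ : ℝ) (k : ℤ) : ℝ := |(k : ℝ)| ^ (-(2 * σ))

lemma zw_summable {σ : ℝ} (h : 1 / 2 < σ) : Summable (zw σ) := by
  exact summable_abs_int_rpow (by linarith)

lemma zw_nonneg (σ : ℝ) (k : ℤ) : 0 ≤ zw σ k := by unfold zw; positivity

lemma abs_int_ge {k : ℤ} (hk : k ≠ 0) : (1 : ℝ) ≤ |(k : ℝ)| := by
  have := Int.one_le_abs hk
  exact_mod_cast this

lemma zw_mul_le {γ δ : ℝ} (hγ : 0 ≤ γ) (hδ : 0 ≤ δ) {k j : ℤ} (hk : k ≠ 0) (hj : j ≠ 0) :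
    zw γ k * zw δ j ≤ zw (γ + δ) k + zw (γ + δ) j := by
  unfold zw
  have hk1 := abs_int_ge hk
  have hj1 := abs_int_ge hj
  have e1 : ∀ x : ℝ, 1 ≤ x → x ^ (-(2 * (γ + δ))) = x ^ (-(2 * γ)) * x ^ (-(2 * δ)) := by
    intro x hx
    rw [← Real.rpow_add (by linarith)]; congr 1; ring
  rw [e1 _ hk1, e1 _ hj1]
  rcases le_total |(k : ℝ)| |(j : ℝ)| with h | h
  · have : |(j : ℝ)| ^ (-(2 * δ)) ≤ |(k : ℝ)| ^ (-(2 * δ)) :=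
      Real.rpow_le_rpow_of_nonpos (by linarith) h (by linarith)
    have h2 : |(k : ℝ)| ^ (-(2 * γ)) * |(j : ℝ)| ^ (-(2 * δ)) ≤
      |(k : ℝ)| ^ (-(2 * γ)) * |(k : ℝ)| ^ (-(2 * δ)) := by gcongr
    have : 0 ≤ |(j : ℝ)| ^ (-(2 * γ)) * |(j : ℝ)| ^ (-(2 * δ)) := by positivity
    linarith
  · have : |(k : ℝ)| ^ (-(2 * γ)) ≤ |(j : ℝ)| ^ (-(2 * γ)) :=
      Real.rpow_le_rpow_of_nonpos (by linarith) h (by linarith)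
    have h2 : |(k : ℝ)| ^ (-(2 * γ)) * |(j : ℝ)| ^ (-(2 * δ)) ≤
      |(j : ℝ)| ^ (-(2 * γ)) * |(j : ℝ)| ^ (-(2 * δ)) := by gcongr
    have : 0 ≤ |(k : ℝ)| ^ (-(2 * γ)) * |(k : ℝ)| ^ (-(2 * δ)) := by positivity
    linarith

lemma sq_fc_eq {σ : ℝ} {f : ℝ → ℂ} (h0 : fc f 0 = 0) (k : ℤ) :
    ‖fc f k‖ ^ 2 = zw σ k * ws σ f k := by
  unfold ws zw
  split_ifs with h
  · simp [h, h0]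
  · rw [← mul_assoc, ← Real.rpow_add (by linarith [abs_int_ge h])]
    simp

/-- The product estimate. -/
lemma prod_est {γ δ : ℝ} (hγ : 0 ≤ γ) (hδ : 0 ≤ δ) (hγδ : 1 / 2 < γ + δ)
    {f g : ℝ → ℂ} (hf : Continuous f) (hg : Continuous g) (hf0 : fc f 0 = 0) (hg0 : fc g 0 = 0)
    (hsf : Summable (ws γ f)) (hsg : Summable (ws δ g)) :
    ∫ s in (-π)..π, ‖f s * g s‖ ^ 2 ≤
      (2 * ∑' k, zw (γ + δ) k) * ((∑' k, ws γ f k) * ∑' k, ws δ g k) := by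
  set Z := ∑' k, zw (γ + δ) k with hZ
  have hZs := zw_summable hγδ
  -- double sum
  have hprod : Summable (fun x : ℤ × ℤ => ws γ f x.1 * ws δ g x.2) :=
    hsf.mul_of_nonneg hsg (fun k => ws_nonneg _ _ _) (fun k => ws_nonneg _ _ _)
  let e : ℤ × ℤ ≃ ℤ × ℤ :=
    { toFun := fun x => (x.2, x.1 - x.2)
      invFun := fun y => (y.1 + y.2, y.1)
      left_inv := fun x => by ext <;> simp
      right_inv := fun x => by ext <;> simp }
  have hprod2 : Summable (fun x : ℤ × ℤ => ws γ f x.2 * ws δ g (x.1 - x.2)) :=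
    (e.summable_iff (f := fun x : ℤ × ℤ => ws γ f x.1 * ws δ g x.2)).2 hprod
  have htot : ∑' n, ∑' k, ws γ f k * ws δ g (n - k) = (∑' k, ws γ f k) * ∑' k, ws δ g k := by
    rw [← hprod2.tsum_prod]
    rw [hsf.tsum_mul_tsum hsg hprod]
    exact e.tsum_eq (fun x : ℤ × ℤ => ws γ f x.1 * ws δ g x.2)
  have hrow : ∀ n, Summable fun k => ws γ f k * ws δ g (n - k) := fun n => hprod2.prod_factor n
  -- termwise
  have hfin : ∀ n (F : Finset ℤ), (∑ k ∈ F, ‖fc f k‖ * ‖fc g (n - k)‖) ^ 2 ≤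
      2 * Z * ∑' k, ws γ f k * ws δ g (n - k) := by
    intro n F
    have hterm : ∀ k, ‖fc f k‖ * ‖fc g (n - k)‖ ≤
        √(zw (γ + δ) k + zw (γ + δ) (n - k)) * √(ws γ f k * ws δ g (n - k)) := by
      intro k
      rw [← Real.sqrt_mul (add_nonneg (zw_nonneg _ _) (zw_nonneg _ _))]
      apply Real.le_sqrt_of_sq_le
      rw [mul_pow, sq_fc_eq (σ := γ) hf0, sq_fc_eq (σ := δ) hg0]
      by_cases hk : k = 0
      · simp [hk, ws]
      by_cases hj : n - k = 0
      · simp [hj, ws]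
      have := mul_le_mul_of_nonneg_right (zw_mul_le hγ hδ hk hj)
        (mul_nonneg (ws_nonneg γ f k) (ws_nonneg δ g (n - k)))
      linarith
    calc (∑ k ∈ F, ‖fc f k‖ * ‖fc g (n - k)‖) ^ 2
        ≤ (∑ k ∈ F, √(zw (γ + δ) k + zw (γ + δ) (n - k)) * √(ws γ f k * ws δ g (n - k))) ^ 2 := by
          refine pow_le_pow_left₀ (Finset.sum_nonneg fun k _ => by positivity) ?_ 2
          exact Finset.sum_le_sum fun k _ => hterm k
      _ ≤ (∑ k ∈ F, √(zw (γ + δ) k + zw (γ + δ) (n - k)) ^ 2) *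
            ∑ k ∈ F, √(ws γ f k * ws δ g (n - k)) ^ 2 := Finset.sum_mul_sq_le_sq_mul_sq _ _ _
      _ = (∑ k ∈ F, zw (γ + δ) k + ∑ k ∈ F, zw (γ + δ) (n - k)) *
            ∑ k ∈ F, (ws γ f k * ws δ g (n - k)) := by
          rw [← Finset.sum_add_distrib]
          congr 1
          · exact Finset.sum_congr rfl fun k _ =>
              Real.sq_sqrt (add_nonneg (zw_nonneg _ _) (zw_nonneg _ _))
          · exact Finset.sum_congr rfl fun k _ =>
              Real.sq_sqrt (mul_nonneg (ws_nonneg _ _ _) (ws_nonneg _ _ _))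
      _ ≤ 2 * Z * ∑' k, ws γ f k * ws δ g (n - k) := by
          have hsh : Summable fun k => zw (γ + δ) (n - k) :=
            ((Equiv.subLeft n).summable_iff (f := zw (γ + δ))).2 hZs
          have e2 : ∑' k, zw (γ + δ) (n - k) = Z := (Equiv.subLeft n).tsum_eq (zw (γ + δ))
          have a1 := hZs.sum_le_tsum F (fun k _ => zw_nonneg _ k)
          have a2 := hsh.sum_le_tsum F (fun k _ => zw_nonneg _ _)
          have a3 := (hrow n).sum_le_tsum F (fun k _ => mul_nonneg (ws_nonneg _ _ _) (ws_nonneg _ _ _))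
          have a0 : 0 ≤ ∑ k ∈ F, (ws γ f k * ws δ g (n - k)) :=
            Finset.sum_nonneg fun k _ => mul_nonneg (ws_nonneg _ _ _) (ws_nonneg _ _ _)
          have hZ0 : 0 ≤ Z := tsum_nonneg fun k => zw_nonneg _ k
          apply mul_le_mul _ a3 a0 (by linarith)
          linarith
  have hconvs : ∀ n, Summable fun k => ‖fc f k‖ * ‖fc g (n - k)‖ := by
    intro n
    refine summable_of_sum_le (fun k => by positivity)
      (c := √(2 * Z * ∑' k, ws γ f k * ws δ g (n - k))) fun F => ?_
    exact Real.le_sqrt_of_sq_le (hfin n F)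
  have hn : ∀ n, (2 * π) ^ 2 * ‖fc (fun s => f s * g s) n‖ ^ 2 ≤
      2 * Z * ∑' k, ws γ f k * ws δ g (n - k) := by
    intro n
    have h1 := fc_mul_le hf hg n (hconvs n)
    have h2 : ∑' k, ‖fc f k‖ * ‖fc g (n - k)‖ ≤ √(2 * Z * ∑' k, ws γ f k * ws δ g (n - k)) :=
      (hconvs n).tsum_le_of_sum_le fun F => Real.le_sqrt_of_sq_le (hfin n F)
    have hnn : 0 ≤ 2 * Z * ∑' k, ws γ f k * ws δ g (n - k) := by
      refine le_trans (by positivity) (hfin n ∅)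
    rw [← mul_pow, ← Real.sq_sqrt hnn]
    have := pi_pos
    gcongr
    exact h1.trans h2
  have hP := parseval (f := fun s => f s * g s) (by fun_prop)
  have hS : HasSum (fun n => 2 * Z * ∑' k, ws γ f k * ws δ g (n - k))
      (2 * Z * ((∑' k, ws γ f k) * ∑' k, ws δ g k)) := by
    rw [← htot]
    exact (hprod2.prod.hasSum).mul_left _
  have hfinal := hasSum_le hn (hP.mul_left ((2 * π) ^ 2)) hS
  have hnn0 : 0 ≤ ∫ s in (-π)..π, ‖f s * g s‖ ^ 2 :=
    intervalIntegral.integral_nonneg (by linarith [pi_pos]) fun s _ => by positivity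
  refine le_trans ?_ hfinal
  have hpi : 1 ≤ 2 * π := by linarith [pi_gt_three]
  have : 1 ≤ (2 * π) ^ 2 * (2 * π) := by nlinarith [one_le_pow₀ hpi (n := 2)]
  rw [← mul_assoc]
  exact le_mul_of_one_le_left hnn0 this

/-- A periodic continuously differentiable curve. -/
structure Crv (Y Y' : ℝ → ℂ) : Prop where
  per : Function.Periodic Y (2 * π)
  der : ∀ s, HasDerivAt Y (Y' s) s
  cont' : Continuous Y'

lemma Crv.cont {Y Y' : ℝ → ℂ} (h : Crv Y Y') : Continuous Y :=
  continuous_iff_continuousAt.2 fun s => (h.der s).continuousAt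

lemma Crv.per' {Y Y' : ℝ → ℂ} (h : Crv Y Y') : Function.Periodic Y' (2 * π) := by
  intro s
  have h1 := (h.der (s + 2 * π)).comp_add_const s (2 * π)
  have h2 : (fun x => Y (x + 2 * π)) = Y := funext h.per
  rw [h2] at h1
  exact h1.unique (h.der s)

lemma Crv.sub {Y Y' W W' : ℝ → ℂ} (h : Crv Y Y') (g : Crv W W') :
    Crv (fun s => Y s - W s) (fun s => Y' s - W' s) where
  per := h.per.sub g.per
  der := fun s => (h.der s).sub (g.der s)
  cont' := h.cont'.sub g.cont'

lemma exp_per (k : ℤ) :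
    Function.Periodic (fun s : ℝ => Complex.exp (-Complex.I * (k : ℂ) * (s : ℂ))) (2 * π) := by
  intro s
  simp only
  rw [Complex.exp_eq_exp_iff_exists_int]
  exact ⟨-k, by push_cast; ring⟩

lemma fc_shift {f : ℝ → ℂ} (hf : Function.Periodic f (2 * π)) (τ : ℝ) (k : ℤ) :
    fc (fun s => f (s + τ)) k = Complex.exp (Complex.I * k * τ) * fc f k := by
  set h : ℝ → ℂ := fun s => f s * Complex.exp (-Complex.I * (k : ℂ) * (s : ℂ)) with hh
  have hper : Function.Periodic h (2 * π) := hf.mul (exp_per k)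
  have e1 : fc (fun s => f (s + τ)) k =
      Complex.exp (Complex.I * k * τ) * ∫ s in (-π)..π, h (s + τ) := by
    unfold fc
    rw [← intervalIntegral.integral_const_mul]
    congr 1
    ext s
    simp only [hh]
    rw [mul_left_comm, ← Complex.exp_add]
    congr 2
    push_cast; ring
  rw [e1, intervalIntegral.integral_comp_add_right]
  congr 1
  have := hper.intervalIntegral_add_eq (-π + τ) (-π)
  rw [show -π + τ + 2 * π = π + τ by ring, show -π + 2 * π = π by ring] at this
  exact this

lemma fc_deriv {Y Y' : ℝ → ℂ} (h : Crv Y Y') (k : ℤ) :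
    fc Y' k = Complex.I * k * fc Y k := by
  have hder : ∀ s : ℝ, HasDerivAt (fun s : ℝ => Complex.exp (-Complex.I * (k : ℂ) * (s : ℂ)))
      (-Complex.I * k * Complex.exp (-Complex.I * (k : ℂ) * (s : ℂ))) s := by
    intro s
    have h1 : HasDerivAt (fun s : ℝ => -Complex.I * (k : ℂ) * (s : ℂ)) (-Complex.I * k) s := by
      simpa using (Complex.ofRealCLM.hasDerivAt (x := s)).const_mul (-Complex.I * (k : ℂ))
    have := h1.cexp
    rw [mul_comm (Complex.exp _)] at this
    exact this
  have hibp := intervalIntegral.integral_deriv_mul_eq_sub (a := -π) (b := π)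
    (fun s _ => h.der s) (fun s _ => hder s)
    (h.cont'.intervalIntegrable _ _) (Continuous.intervalIntegrable (by fun_prop) _ _)
  have hb : Y π * Complex.exp (-Complex.I * (k : ℂ) * ((π : ℝ) : ℂ)) =
      Y (-π) * Complex.exp (-Complex.I * (k : ℂ) * ((-π : ℝ) : ℂ)) := by
    have := (h.per.mul (exp_per k)) (-π)
    rw [show -π + 2 * π = π by ring] at this
    exact this
  rw [hb, sub_self] at hibp
  have hc := h.cont
  have hc' := h.cont'
  rw [intervalIntegral.integral_add (Continuous.intervalIntegrable (by fun_prop) _ _)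
    (Continuous.intervalIntegrable (by fun_prop) _ _)] at hibp
  have e2 : (∫ s in (-π)..π, Y s * (-Complex.I * k * Complex.exp (-Complex.I * (k : ℂ) * (s : ℂ))))
      = (-Complex.I * k) * fc Y k := by
    unfold fc
    rw [← intervalIntegral.integral_const_mul]
    congr 1
    ext s; ring
  rw [e2] at hibp
  unfold fc at hibp ⊢
  linear_combination hibp

lemma exp_norm_one (x : ℝ) : ‖Complex.exp (Complex.I * x)‖ = 1 := by
  rw [mul_comm]; exact Complex.norm_exp_ofReal_mul_I x

lemma exp_sub_one_le (x : ℝ) {ε : ℝ} (h0 : 0 ≤ ε) (h1 : ε ≤ 1) :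
    ‖Complex.exp (Complex.I * x) - 1‖ ≤ 2 * |x| ^ ε := by
  rcases le_total |x| 1 with h | h
  · have a : ‖Complex.exp (Complex.I * x) - 1‖ ≤ |x| := by
      simpa using Real.norm_exp_I_mul_ofReal_sub_one_le (x := x)
    rcases eq_or_ne x 0 with rfl | hx
    · simp; positivity
    have : |x| ^ (1 : ℝ) ≤ |x| ^ ε := Real.rpow_le_rpow_of_exponent_ge (abs_pos.2 hx) h h1
    rw [Real.rpow_one] at this
    have := abs_nonneg x
    linarith
  · have a : ‖Complex.exp (Complex.I * x) - 1‖ ≤ 1 + 1 := by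
      refine (norm_sub_le _ _).trans ?_
      rw [exp_norm_one]; simp
    have : 1 ≤ |x| ^ ε := Real.one_le_rpow h h0
    linarith

lemma exp_second_le (x : ℝ) :
    ‖Complex.I * x * Complex.exp (Complex.I * x) - (Complex.exp (Complex.I * x) - 1)‖
      ≤ 3 * x ^ 2 := by
  have e : Complex.I * x * Complex.exp (Complex.I * x) - (Complex.exp (Complex.I * x) - 1) =
      Complex.exp (Complex.I * x) *
        (Complex.exp (-(Complex.I * x)) - 1 - (-(Complex.I * x))) := by
    have : Complex.exp (Complex.I * x) * Complex.exp (-(Complex.I * x)) = 1 := by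
      rw [← Complex.exp_add]; simp
    linear_combination -this
  rw [e, norm_mul, exp_norm_one, one_mul]
  have hn : ‖-(Complex.I * (x : ℂ))‖ = |x| := by simp
  rcases le_total |x| 1 with h | h
  · have := Complex.norm_exp_sub_one_sub_id_le (x := -(Complex.I * (x : ℂ))) (by rw [hn]; exact h)
    rw [hn, sq_abs] at this
    nlinarith [sq_nonneg x]
  · have a : ‖Complex.exp (-(Complex.I * x))‖ = 1 := by
      have := exp_norm_one (-x)
      rwa [Complex.ofReal_neg, mul_neg] at this
    have b := norm_sub_le (Complex.exp (-(Complex.I * x)) - 1) (-(Complex.I * x))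
    have c := norm_sub_le (Complex.exp (-(Complex.I * x))) 1
    rw [a, norm_one] at c
    rw [hn] at b
    have : |x| ≤ x ^ 2 := by rw [← sq_abs]; nlinarith
    linarith

/-- Squared Sobolev norm. -/
def En (σ : ℝ) (f : ℝ → ℂ) : ℝ := ∑' k, ws σ f k

lemma En_nonneg (σ : ℝ) (f : ℝ → ℂ) : 0 ≤ En σ f := tsum_nonneg fun k => ws_nonneg _ _ _

lemma ws_mono_of {σ ρ c : ℝ} {f g : ℝ → ℂ} (hρ : 0 ≤ c)
    (h : ∀ k : ℤ, k ≠ 0 → ‖fc f k‖ ≤ c * |(k : ℝ)| ^ ρ * ‖fc g k‖) (k : ℤ) :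
    ws σ f k ≤ c ^ 2 * ws (σ + ρ) g k := by
  unfold ws
  split_ifs with hk
  · simp
  · have h1 := h k hk
    have hk1 := abs_int_ge hk
    have e : |(k : ℝ)| ^ (2 * (σ + ρ)) = |(k : ℝ)| ^ (2 * σ) * (|(k : ℝ)| ^ ρ) ^ 2 := by
      rw [← Real.rpow_natCast, ← Real.rpow_mul (by linarith), ← Real.rpow_add (by linarith)]
      congr 1; push_cast; ring
    rw [e]
    calc |(k : ℝ)| ^ (2 * σ) * ‖fc f k‖ ^ 2 ≤
        |(k : ℝ)| ^ (2 * σ) * (c * |(k : ℝ)| ^ ρ * ‖fc g k‖) ^ 2 := by gcongr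
      _ = _ := by ring

lemma ws_mono_exp {σ ρ : ℝ} (h : σ ≤ ρ) (f : ℝ → ℂ) (k : ℤ) : ws σ f k ≤ ws ρ f k := by
  unfold ws
  split_ifs with hk
  · simp
  · have hk1 := abs_int_ge hk
    gcongr

lemma En_mono_of {σ ρ c : ℝ} {f g : ℝ → ℂ} (hρ : 0 ≤ c)
    (h : ∀ k : ℤ, k ≠ 0 → ‖fc f k‖ ≤ c * |(k : ℝ)| ^ ρ * ‖fc g k‖) (hg : Summable (ws (σ + ρ) g)) :
    Summable (ws σ f) ∧ En σ f ≤ c ^ 2 * En (σ + ρ) g := by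
  have h1 := ws_mono_of (σ := σ) hρ h
  have h2 : Summable (ws σ f) :=
    Summable.of_nonneg_of_le (fun k => ws_nonneg _ _ _) h1 (hg.mul_left _)
  refine ⟨h2, ?_⟩
  unfold En
  rw [← tsum_mul_left]
  exact h2.tsum_le_tsum h1 (hg.mul_left _)

lemma En_mono_exp {σ ρ : ℝ} (h : σ ≤ ρ) {f : ℝ → ℂ} (hg : Summable (ws ρ f)) :
    Summable (ws σ f) ∧ En σ f ≤ En ρ f := by
  have h2 : Summable (ws σ f) :=
    Summable.of_nonneg_of_le (fun k => ws_nonneg _ _ _) (ws_mono_exp h f) hg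
  exact ⟨h2, h2.tsum_le_tsum (ws_mono_exp h f) hg⟩

lemma L2_le_En {f : ℝ → ℂ} (hf : Continuous f) (h0 : fc f 0 = 0) {σ : ℝ} (hσ : 0 ≤ σ)
    (hs : Summable (ws σ f)) : ∫ s in (-π)..π, ‖f s‖ ^ 2 ≤ En σ f := by
  have h1 := parseval hf
  have h2 : ∀ k, ‖fc f k‖ ^ 2 ≤ ws σ f k := by
    intro k
    refine le_trans (le_of_eq ?_) (ws_mono_exp hσ f k)
    unfold ws
    split_ifs with hk
    · simp [hk, h0]
    · simp
  have h3 := hasSum_le h2 h1 hs.hasSum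
  have hnn0 : 0 ≤ ∫ s in (-π)..π, ‖f s‖ ^ 2 :=
    intervalIntegral.integral_nonneg (by linarith [pi_pos]) fun s _ => by positivity
  unfold En
  have : 1 ≤ 2 * π := by linarith [pi_gt_three]
  exact le_trans (le_mul_of_one_le_left hnn0 this) h3

/-- differences -/
lemma fc_diff {f : ℝ → ℂ} (hf : Function.Periodic f (2 * π)) (hc : Continuous f) (τ : ℝ) (k : ℤ) :
    fc (fun s => f (s + τ) - f s) k = (Complex.exp (Complex.I * (k * τ : ℝ)) - 1) * fc f k := by
  rw [fc_sub (f := fun s => f (s + τ)) (by fun_prop) hc, fc_shift hf]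
  push_cast
  rw [← mul_assoc]
  ring

lemma diff_est {f : ℝ → ℂ} (hf : Function.Periodic f (2 * π)) (hc : Continuous f) (τ : ℝ)
    {δ ε : ℝ} (h0 : 0 ≤ ε) (h1 : ε ≤ 1) (hs : Summable (ws (δ + ε) f)) :
    fc (fun s => f (s + τ) - f s) 0 = 0 ∧ Summable (ws δ (fun s => f (s + τ) - f s)) ∧
    En δ (fun s => f (s + τ) - f s) ≤ (2 * |τ| ^ ε) ^ 2 * En (δ + ε) f := by
  refine ⟨by rw [fc_diff hf hc]; simp, ?_⟩
  refine En_mono_of (by positivity) (fun k hk => ?_) hs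
  rw [fc_diff hf hc, norm_mul]
  gcongr
  refine (exp_sub_one_le _ h0 h1).trans (le_of_eq ?_)
  rw [abs_mul, Real.mul_rpow (abs_nonneg _) (abs_nonneg _)]
  ring

lemma diff_L2 {f : ℝ → ℂ} (hf : Function.Periodic f (2 * π)) (hc : Continuous f) (τ : ℝ)
    {δ ε : ℝ} (hδ : 0 ≤ δ) (h0 : 0 ≤ ε) (h1 : ε ≤ 1) (hs : Summable (ws (δ + ε) f)) :
    ∫ s in (-π)..π, ‖f (s + τ) - f s‖ ^ 2 ≤ (2 * |τ| ^ ε) ^ 2 * En (δ + ε) f := by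
  obtain ⟨a, b, c⟩ := diff_est hf hc τ h0 h1 hs
  exact (L2_le_En (by fun_prop) a hδ b).trans c

/-- the derivative in `τ` of the difference quotient -/
lemma fc_quot {Y Y' : ℝ → ℂ} (h : Crv Y Y') (τ : ℝ) (k : ℤ) :
    fc (fun s => (Y' (s + τ) - (Y (s + τ) - Y s) / τ) / τ) k =
      (Complex.I * (k * τ : ℝ) * Complex.exp (Complex.I * (k * τ : ℝ)) -
        (Complex.exp (Complex.I * (k * τ : ℝ)) - 1)) / τ ^ 2 * fc Y k := by
  have hc := h.cont
  have hc' := h.cont'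
  rcases eq_or_ne τ 0 with rfl | hτ
  · simp [fc]
  have hτ' : (τ : ℂ) ≠ 0 := by exact_mod_cast hτ
  have e : (fun s => (Y' (s + τ) - (Y (s + τ) - Y s) / τ) / τ) =
      fun s => (τ : ℂ)⁻¹ * Y' (s + τ) - ((τ : ℂ) ^ 2)⁻¹ * (Y (s + τ) - Y s) := by
    ext s; field_simp
  rw [e, fc_sub (by fun_prop) (by fun_prop), fc_mul_left, fc_mul_left, fc_diff h.per hc,
    fc_shift h.per', fc_deriv h]
  push_cast
  rw [← mul_assoc]
  field_simp

lemma quot_est {Y Y' : ℝ → ℂ} (h : Crv Y Y') {τ : ℝ} (hτ : τ ≠ 0) {θ : ℝ}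
    (hs : Summable (ws (2 + θ) Y)) :
    fc (fun s => (Y' (s + τ) - (Y (s + τ) - Y s) / τ) / τ) 0 = 0 ∧
    Summable (ws θ (fun s => (Y' (s + τ) - (Y (s + τ) - Y s) / τ) / τ)) ∧
    En θ (fun s => (Y' (s + τ) - (Y (s + τ) - Y s) / τ) / τ) ≤ 3 ^ 2 * En (2 + θ) Y := by
  refine ⟨by rw [fc_quot h]; simp, ?_⟩
  rw [add_comm] at hs ⊢
  refine En_mono_of (by positivity) (fun k hk => ?_) hs
  rw [fc_quot h, norm_mul, norm_div]
  gcongr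
  have := exp_second_le (k * τ)
  have hτ2 : ‖(τ : ℂ) ^ 2‖ = τ ^ 2 := by rw [norm_pow, Complex.norm_real, Real.norm_eq_abs, sq_abs]
  rw [hτ2, div_le_iff₀ (by positivity)]
  refine this.trans (le_of_eq ?_)
  have : |(k : ℝ)| ^ (2 : ℝ) = (k : ℝ) ^ 2 := by
    rw [show (2 : ℝ) = ((2 : ℕ) : ℝ) by norm_num, Real.rpow_natCast, sq_abs]
  rw [this]; ring

lemma second_est {Y Y' Y'' : ℝ → ℂ} (h : Crv Y Y') (h' : Crv Y' Y'') (τ : ℝ) {θ : ℝ}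
    (hs : Summable (ws (2 + θ) Y)) :
    fc (fun s => Y'' (s + τ)) 0 = 0 ∧
    Summable (ws θ (fun s => Y'' (s + τ))) ∧
    En θ (fun s => Y'' (s + τ)) ≤ 1 ^ 2 * En (2 + θ) Y := by
  refine ⟨by rw [fc_shift h'.per', fc_deriv h']; simp, ?_⟩
  rw [add_comm] at hs ⊢
  refine En_mono_of (by positivity) (fun k hk => ?_) hs
  rw [fc_shift h'.per', fc_deriv h', fc_deriv h]
  have : |(k : ℝ)| ^ (2 : ℝ) = |(k : ℝ)| ^ 2 := by
    rw [show (2 : ℝ) = ((2 : ℕ) : ℝ) by norm_num, Real.rpow_natCast]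
  rw [this, norm_mul]
  have e := exp_norm_one (k * τ)
  push_cast at e
  rw [← mul_assoc] at e
  rw [e]
  simp only [norm_mul, Complex.norm_I, Complex.norm_intCast]
  apply le_of_eq; ring

/-- the regular kernel -/
def kap (τ : ℝ) : ℝ := 1 / τ - τ / (4 * Real.sin (τ / 2) ^ 2)

lemma kap_bound {τ : ℝ} (h : |τ| ≤ π) : |kap τ| ≤ 4 := by
  rcases eq_or_ne τ 0 with rfl | hτ
  · simp [kap]
  have hτp : 0 < |τ| := abs_pos.2 hτ
  have hpi := pi_pos
  have hs1 : 2 / π * |τ / 2| ≤ |Real.sin (τ / 2)| := by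
    apply Real.mul_abs_le_abs_sin
    rw [abs_div, abs_two]; linarith
  have hs2 : τ ^ 2 / π ^ 2 ≤ Real.sin (τ / 2) ^ 2 := by
    have : (2 / π * |τ / 2|) ^ 2 ≤ |Real.sin (τ / 2)| ^ 2 := by gcongr
    rw [sq_abs, mul_pow, sq_abs] at this
    refine le_trans (le_of_eq ?_) this
    field_simp
    try ring
  have hs0 : 0 < Real.sin (τ / 2) ^ 2 := lt_of_lt_of_le (by positivity) hs2
  have hcos : Real.cos τ = 1 - 2 * Real.sin (τ / 2) ^ 2 := by
    have := Real.cos_two_mul (τ / 2)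
    rw [show 2 * (τ / 2) = τ by ring] at this
    have h2 := Real.sin_sq_add_cos_sq (τ / 2)
    linarith
  have hlow : 4 * Real.sin (τ / 2) ^ 2 ≤ τ ^ 2 := by
    have := Real.one_sub_sq_div_two_le_cos (x := τ)
    linarith
  have hup : τ ^ 2 - 4 * Real.sin (τ / 2) ^ 2 ≤ |τ| ^ 3 := by
    rcases le_total |τ| 1 with h1 | h1
    · have := (abs_le.1 (Real.cos_bound h1)).2
      have e : |τ| ^ 4 ≤ |τ| ^ 3 := pow_le_pow_of_le_one (abs_nonneg _) h1 (by norm_num)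
      have : 0 ≤ |τ| ^ 3 := by positivity
      nlinarith
    · have e : |τ| ^ 2 ≤ |τ| ^ 3 := pow_le_pow_right₀ h1 (by norm_num)
      rw [sq_abs] at e
      linarith
  have e : kap τ = -((τ ^ 2 - 4 * Real.sin (τ / 2) ^ 2) / (τ * (4 * Real.sin (τ / 2) ^ 2))) := by
    unfold kap
    have : Real.sin (τ / 2) ≠ 0 := by
      intro h0; rw [h0] at hs0; norm_num at hs0
    field_simp
    ring
  rw [e, abs_neg, abs_div, abs_of_nonneg (by linarith), abs_mul,
    abs_of_pos (show 0 < 4 * Real.sin (τ / 2) ^ 2 by positivity), div_le_iff₀ (by positivity)]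
  refine hup.trans ?_
  have hpi2 : π ^ 2 ≤ 16 := by nlinarith [Real.pi_le_four]
  have : |τ| ^ 2 ≤ 16 * Real.sin (τ / 2) ^ 2 := by
    rw [sq_abs]
    rw [div_le_iff₀ (by positivity)] at hs2
    nlinarith
  calc |τ| ^ 3 = |τ| * |τ| ^ 2 := by ring
    _ ≤ |τ| * (16 * Real.sin (τ / 2) ^ 2) := by gcongr
    _ = _ := by ring

/-- difference quotient -/
def Lq (Y : ℝ → ℂ) (s τ : ℝ) : ℂ := (Y (s + τ) - Y s) / τ
/-- its derivative in `τ` -/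
def Dq (Y Y' : ℝ → ℂ) (s τ : ℝ) : ℂ := (Y' (s + τ) - (Y (s + τ) - Y s) / τ) / τ

/-- the complexified integrand, as a function of `L`, `M`, `τ` -/
def FF (L M : ℂ) (τ : ℝ) : ℂ :=
  (M ^ 2 / L + conj M ^ 2 * L / conj L ^ 2 - 2 * L) / (2 * τ) + kap τ * L

/-- the complexified integrand -/
def FI (Y Y' : ℝ → ℂ) (s τ : ℝ) : ℂ := FF (Lq Y s τ) (Y' (s + τ)) τ

lemma int_sq_le {f : ℝ → ℝ} {a b : ℝ} (hab : a ≤ b) (hf : Continuous f) :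
    (∫ x in a..b, f x) ^ 2 ≤ (b - a) * ∫ x in a..b, f x ^ 2 := by
  rcases eq_or_lt_of_le hab with rfl | hlt
  · simp
  set I := ∫ x in a..b, f x with hI
  set c := I / (b - a) with hc
  have h1 : 0 ≤ ∫ x in a..b, (f x - c) ^ 2 :=
    intervalIntegral.integral_nonneg hab fun s _ => by positivity
  have h2 : (∫ x in a..b, (f x - c) ^ 2) = (∫ x in a..b, f x ^ 2) - 2 * c * I + (b - a) * c ^ 2 := by
    have : ∀ x, (f x - c) ^ 2 = (f x ^ 2 - 2 * c * f x) + c ^ 2 := fun x => by ring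
    simp_rw [this]
    rw [intervalIntegral.integral_add, intervalIntegral.integral_sub,
      intervalIntegral.integral_const_mul, intervalIntegral.integral_const, smul_eq_mul]
    all_goals exact Continuous.intervalIntegrable (by fun_prop) _ _
  rw [h2] at h1
  have hba : 0 < b - a := by linarith
  have e : I = c * (b - a) := by rw [hc]; field_simp
  rw [e] at h1 ⊢
  nlinarith

/-- Hölder-1/2 bound -/
def Hol (Y' : ℝ → ℂ) (K : ℝ) : Prop := ∀ a b, |a - b| ≤ π → ‖Y' a - Y' b‖ ≤ K * √|a - b|

lemma hol_of_C2 {Y' Y'' : ℝ → ℂ} (h : Crv Y' Y'') {K : ℝ} (hK : 0 ≤ K)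
    (hE : ∫ s in (-π)..π, ‖Y'' s‖ ^ 2 ≤ K ^ 2) : Hol Y' K := by
  have hpi := pi_pos
  have hc' := h.cont'
  have key : ∀ a b, a ≤ b → b - a ≤ π → ‖Y' b - Y' a‖ ≤ K * √(b - a) := by
    intro a b hab hb
    have e1 : Y' b - Y' a = ∫ x in a..b, Y'' x :=
      (intervalIntegral.integral_eq_sub_of_hasDerivAt (fun x _ => h.der x)
        (h.cont'.intervalIntegrable _ _)).symm
    have e2 : ‖Y' b - Y' a‖ ≤ ∫ x in a..b, ‖Y'' x‖ := by
      rw [e1]; exact intervalIntegral.norm_integral_le_integral_norm hab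
    have e3 := int_sq_le hab (f := fun x => ‖Y'' x‖) (by fun_prop)
    have e4 : ∫ x in a..b, ‖Y'' x‖ ^ 2 ≤ ∫ x in a..(a + 2 * π), ‖Y'' x‖ ^ 2 := by
      apply intervalIntegral.integral_mono_interval le_rfl hab (by linarith)
      · exact Eventually.of_forall fun x => by positivity
      · exact Continuous.intervalIntegrable (by fun_prop) _ _
    have hper : Function.Periodic (fun x => ‖Y'' x‖ ^ 2) (2 * π) := fun x => by
      simp only [h.per' x]
    have e5 := hper.intervalIntegral_add_eq a (-π)
    rw [show -π + 2 * π = π by ring] at e5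
    rw [e5] at e4
    have e6 : ‖Y' b - Y' a‖ ^ 2 ≤ (K * √(b - a)) ^ 2 := by
      rw [mul_pow, Real.sq_sqrt (by linarith)]
      calc ‖Y' b - Y' a‖ ^ 2 ≤ (∫ x in a..b, ‖Y'' x‖) ^ 2 := by gcongr
        _ ≤ (b - a) * ∫ x in a..b, ‖Y'' x‖ ^ 2 := e3
        _ ≤ (b - a) * K ^ 2 := by
          apply mul_le_mul_of_nonneg_left _ (by linarith)
          linarith
        _ = _ := by ring
    exact le_of_sq_le_sq e6 (by positivity)
  intro a b hab
  rcases le_total a b with h1 | h1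
  · rw [norm_sub_rev, abs_sub_comm, abs_of_nonneg (by linarith)]
    rw [abs_sub_comm, abs_of_nonneg (by linarith)] at hab
    exact key a b h1 hab
  · rw [abs_of_nonneg (by linarith)] at hab ⊢
    exact key b a h1 hab

lemma sup_of_hol {Y Y' : ℝ → ℂ} (h : Crv Y Y') {K : ℝ} (hK : 0 ≤ K) (hH : Hol Y' K) (s : ℝ) :
    ‖Y' s‖ ≤ 2 * K := by
  have hpi := pi_pos
  have hc' := h.cont'
  have e1 : ∫ t in (-π)..π, Y' (s + t) = 0 := by
    have := intervalIntegral.integral_eq_sub_of_hasDerivAt (a := -π) (b := π)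
      (f := fun t => Y (s + t)) (f' := fun t => Y' (s + t))
      (fun x _ => (h.der (s + x)).comp_const_add s x)
      (Continuous.intervalIntegrable (by fun_prop) _ _)
    rw [this]
    have := h.per (s + -π)
    rw [show s + -π + 2 * π = s + π by ring] at this
    rw [this, sub_self]
  have e2 : ∫ t in (-π)..π, (Y' s - Y' (s + t)) = (2 * π : ℝ) • Y' s := by
    rw [intervalIntegral.integral_sub, e1, sub_zero, intervalIntegral.integral_const]
    · congr 1; ring
    all_goals exact Continuous.intervalIntegrable (by fun_prop) _ _
  have e3 : ‖∫ t in (-π)..π, (Y' s - Y' (s + t))‖ ≤ 2 * K * |π - -π| := by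
    apply intervalIntegral.norm_integral_le_of_norm_le_const
    intro t ht
    rw [Set.uIoc_of_le (by linarith)] at ht
    have ht2 : |t| ≤ π := abs_le.2 ⟨ht.1.le, ht.2⟩
    have := hH s (s + t) (by simpa using ht2)
    refine this.trans ?_
    rw [show s - (s + t) = -t by ring, abs_neg, mul_comm]
    gcongr
    rw [Real.sqrt_le_left (by norm_num)]
    linarith [Real.pi_le_four]
  rw [e2, norm_smul, Real.norm_eq_abs, abs_of_pos (by linarith), abs_of_pos (by linarith)] at e3
  nlinarith

lemma lin_approx {Y Y' : ℝ → ℂ} (h : Crv Y Y') {K : ℝ} (hK : 0 ≤ K) (hH : Hol Y' K) {a b c : ℝ}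
    (hab : |b - a| ≤ π) (hc : c ∈ Set.uIcc a b) :
    ‖Y b - Y a - ((b - a : ℝ) : ℂ) * Y' c‖ ≤ K * √|b - a| * |b - a| := by
  have := Convex.norm_image_sub_le_of_norm_hasDerivWithin_le (s := Set.uIcc a b)
    (f := fun x => Y x - (x : ℂ) * Y' c) (f' := fun x => Y' x - Y' c) (C := K * √|b - a|)
    (x := a) (y := b)
    (fun x _ => by
      have h1 : HasDerivAt (fun x : ℝ => (x : ℂ) * Y' c) (Y' c) x := by
        simpa using (Complex.ofRealCLM.hasDerivAt (x := x)).mul_const (Y' c)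
      exact ((h.der x).sub h1).hasDerivWithinAt)
    (fun x hx => by
      have hxc : |x - c| ≤ |b - a| := Set.abs_sub_le_of_uIcc_subset_uIcc
        (Set.uIcc_subset_uIcc hc hx)
      refine (hH x c (hxc.trans hab)).trans ?_
      gcongr)
    (convex_uIcc a b) Set.left_mem_uIcc Set.right_mem_uIcc
  rw [Real.norm_eq_abs] at this
  refine le_trans (le_of_eq ?_) this
  congr 1
  push_cast
  ring

lemma Lq_sup {Y Y' : ℝ → ℂ} (h : Crv Y Y') {A : ℝ} (hA : ∀ s, ‖Y' s‖ ≤ A) (s τ : ℝ) :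
    ‖Lq Y s τ‖ ≤ A := by
  have hA0 : 0 ≤ A := (norm_nonneg _).trans (hA 0)
  unfold Lq
  rcases eq_or_ne τ 0 with rfl | hτ
  · simpa using hA0
  rw [norm_div, Complex.norm_real, div_le_iff₀ (by simpa using hτ)]
  have := Convex.norm_image_sub_le_of_norm_hasDerivWithin_le (s := Set.univ)
    (f := Y) (f' := Y') (C := A) (x := s) (y := s + τ)
    (fun x _ => (h.der x).hasDerivWithinAt) (fun x _ => hA x) convex_univ trivial trivial
  simpa using this

lemma m_bound {Y Y' : ℝ → ℂ} (h : Crv Y Y') {K : ℝ} (hK : 0 ≤ K) (hH : Hol Y' K) {s τ : ℝ}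
    (hτ : τ ≠ 0) (hτp : |τ| ≤ π) : ‖Y' (s + τ) - Lq Y s τ‖ ≤ K * √|τ| := by
  have := lin_approx h hK hH (a := s) (b := s + τ) (c := s + τ) (by simpa using hτp)
    Set.right_mem_uIcc
  rw [add_sub_cancel_left] at this
  have hτc : (τ : ℂ) ≠ 0 := by exact_mod_cast hτ
  have e : Y' (s + τ) - Lq Y s τ = -(Y (s + τ) - Y s - τ * Y' (s + τ)) / τ := by
    unfold Lq; field_simp; ring
  rw [e, norm_div, norm_neg, Complex.norm_real, Real.norm_eq_abs,
    div_le_iff₀ (abs_pos.2 hτ)]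
  exact this

/-- well stretched -/
def WS (Y : ℝ → ℂ) (l : ℝ) : Prop := ∀ s₁ s₂ : ℝ, |s₁ - s₂| ≤ π → l * |s₁ - s₂| ≤ ‖Y s₁ - Y s₂‖

lemma Lq_low {Y : ℝ → ℂ} {l : ℝ} (h : WS Y l) {s τ : ℝ} (hτ : τ ≠ 0) (hτp : |τ| ≤ π) :
    l ≤ ‖Lq Y s τ‖ := by
  unfold Lq
  rw [norm_div, Complex.norm_real, Real.norm_eq_abs, le_div_iff₀ (abs_pos.2 hτ)]
  have := h (s + τ) s (by simpa using hτp)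
  simpa using this

lemma FF_bound {L M : ℂ} {l A τ B : ℝ} (hl : 0 < l) (hL : l ≤ ‖L‖) (hLA : ‖L‖ ≤ A) (hMA : ‖M‖ ≤ A)
    (hm : ‖M - L‖ ≤ B) (hτ : τ ≠ 0) (hτp : |τ| ≤ π) :
    ‖FF L M τ‖ ≤ 2 * A / l * (B / |τ|) + 4 * A := by
  have hL0 : L ≠ 0 := by rw [← norm_pos_iff]; linarith
  have hLc : conj L ≠ 0 := by simpa using hL0
  have hτc : (τ : ℂ) ≠ 0 := by exact_mod_cast hτ
  have hA : 0 ≤ A := (norm_nonneg _).trans hLA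
  have hB : 0 ≤ B := (norm_nonneg _).trans hm
  have hLn : 0 < ‖L‖ := by linarith
  have e : FF L M τ = ((M - L) * (M + L) / L + conj (M - L) * conj (M + L) * L / conj L ^ 2)
      / (2 * τ) + kap τ * L := by
    unfold FF
    congr 2
    simp only [map_sub, map_add]
    field_simp
    ring
  rw [e]
  have h1 : ‖M + L‖ ≤ 2 * A := (norm_add_le _ _).trans (by linarith)
  have hq : ‖M - L‖ * ‖M + L‖ / ‖L‖ ≤ B * (2 * A) / l := by gcongr
  have t1 : ‖(M - L) * (M + L) / L‖ ≤ B * (2 * A) / l := by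
    rw [norm_div, norm_mul]; exact hq
  have t2 : ‖conj (M - L) * conj (M + L) * L / conj L ^ 2‖ ≤ B * (2 * A) / l := by
    rw [norm_div, norm_mul, norm_mul, norm_pow, Complex.norm_conj, Complex.norm_conj,
      Complex.norm_conj]
    refine le_trans (le_of_eq ?_) hq
    field_simp
  have t3 : ‖(kap τ : ℂ) * L‖ ≤ 4 * A := by
    rw [norm_mul, Complex.norm_real, Real.norm_eq_abs]
    exact mul_le_mul (kap_bound hτp) hLA (norm_nonneg _) (by norm_num)
  refine (norm_add_le _ _).trans (add_le_add ?_ t3)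
  rw [norm_div, norm_mul, Complex.norm_real, Real.norm_eq_abs]
  have hτ0 := abs_pos.2 hτ
  calc _ ≤ (B * (2 * A) / l + B * (2 * A) / l) / (‖(2 : ℂ)‖ * |τ|) := by
        gcongr
        exact (norm_add_le _ _).trans (add_le_add t1 t2)
    _ = _ := by
        rw [Complex.norm_ofNat]; field_simp; ring

lemma abs_rpow_integrable {r : ℝ} (hr : -1 < r) :
    IntervalIntegrable (fun τ : ℝ => |τ| ^ r) volume (-π) π := by
  have hpi := pi_pos
  have h1 : IntervalIntegrable (fun τ : ℝ => |τ| ^ r) volume 0 π := by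
    refine (intervalIntegral.intervalIntegrable_rpow' hr).congr fun x hx => ?_
    rw [Set.uIoc_of_le hpi.le] at hx
    simp only [abs_of_pos hx.1]
  have h2 : IntervalIntegrable (fun τ : ℝ => |τ| ^ r) volume 0 (-π) := by
    have := (IntervalIntegrable.iff_comp_neg (f := fun τ : ℝ => |τ| ^ r)).1 h1
    simpa using this
  exact h2.symm.trans h1

/-- the dominating function -/
def domF (K l τ : ℝ) : ℝ := 4 * K / l * (K * |τ| ^ (-(1 / 2) : ℝ)) + 8 * K

lemma domF_int (K l : ℝ) : IntervalIntegrable (domF K l) volume (-π) π := by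
  unfold domF
  have := abs_rpow_integrable (r := -(1 / 2)) (by norm_num)
  exact ((this.const_mul K).const_mul _).add (by simp)

lemma FI_bound {Y Y' : ℝ → ℂ} (h : Crv Y Y') {K l : ℝ} (hK : 0 ≤ K) (hH : Hol Y' K) (hl : 0 < l)
    (hw : WS Y l) {s τ : ℝ} (hτ : τ ≠ 0) (hτp : |τ| ≤ π) : ‖FI Y Y' s τ‖ ≤ domF K l τ := by
  have hA := sup_of_hol h hK hH
  refine (FF_bound hl (Lq_low hw hτ hτp) (Lq_sup h hA s τ) (hA _) (m_bound h hK hH hτ hτp)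
    hτ hτp).trans (le_of_eq ?_)
  unfold domF
  have : √|τ| / |τ| = |τ| ^ (-(1 / 2) : ℝ) := by
    rw [Real.sqrt_eq_rpow, ← Real.rpow_sub_one (abs_pos.2 hτ).ne']; norm_num
  rw [mul_div_assoc K, this]
  ring

lemma FI_meas {Y Y' : ℝ → ℂ} (h : Crv Y Y') : Measurable (fun x : ℝ × ℝ => FI Y Y' x.1 x.2) := by
  have h1 := h.cont.measurable
  have h2 := h.cont'.measurable
  have h3 : Measurable kap := by unfold kap; fun_prop
  have h4 : Measurable (fun z : ℂ => conj z) := Complex.continuous_conj.measurable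
  have h5 : Measurable (fun x : ℝ × ℝ => Lq Y x.1 x.2) := by unfold Lq; fun_prop
  unfold FI FF
  fun_prop

lemma FI_int {Y Y' : ℝ → ℂ} (h : Crv Y Y') {K l : ℝ} (hK : 0 ≤ K) (hH : Hol Y' K) (hl : 0 < l)
    (hw : WS Y l) (s : ℝ) : IntervalIntegrable (FI Y Y' s) volume (-π) π := by
  have hpi := pi_pos
  refine (domF_int K l).mono_fun
    ((FI_meas h).comp measurable_prodMk_left).aestronglyMeasurable ?_
  rw [EventuallyLE, ae_restrict_iff' measurableSet_uIoc]
  have : ∀ᵐ τ : ℝ, τ ≠ 0 := by simp [ae_iff]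
  filter_upwards [this] with τ hτ hτ2
  rw [Set.uIoc_of_le (by linarith)] at hτ2
  have := FI_bound h hK hH hl hw (s := s) hτ (abs_le.2 ⟨hτ2.1.le, hτ2.2⟩)
  exact this.trans (le_abs_self _)

/-- The function whose derivative carries the worst part of the difference. -/
def PHI (a b M1 M2 : ℂ) : ℂ :=
  (a - b) + (M1 - a + (M2 - b)) / (2 * a) * (a - b) + a / conj a * conj (a - b)
    + a / (2 * conj a ^ 2) * conj (M1 - a + (M2 - b)) * conj (a - b)

/-- Its derivative. -/
def PD (a b a' b' N1 N2 : ℂ) (τ : ℝ) : ℂ :=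
  (a' - b') + (τ * a' + τ * b') / (2 * a) * (a' - b')
    + ((N1 - a' + (N2 - b')) / (2 * a) - (τ * a' + τ * b') * a' / (2 * a ^ 2)) * (a - b)
    + a / conj a * conj (a' - b') + (a' / conj a - a * conj a' / conj a ^ 2) * conj (a - b)
    + a / (2 * conj a ^ 2) * conj (τ * a' + τ * b') * conj (a' - b')
    + ((a' / (2 * conj a ^ 2) - a * conj a' / conj a ^ 3) * conj (τ * a' + τ * b')
        + a / (2 * conj a ^ 2) * conj (N1 - a' + (N2 - b'))) * conj (a - b)

/-- Algebraic form of the remainder. -/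
lemma rem_eq {a b a' b' N1 N2 : ℂ} {τ : ℝ} (ha : a ≠ 0) (hb : b ≠ 0) (hτ : τ ≠ 0) :
    FF a (a + τ * a') τ - FF b (b + τ * b') τ - PD a b a' b' N1 N2 τ =
      (kap τ - (N1 - a' + (N2 - b')) * a⁻¹ / 2 + (τ * a' + τ * b') * a' * a⁻¹ * a⁻¹ / 2
        - (τ * b') * b' * a⁻¹ * b⁻¹ / 2 + conj b' * conj a⁻¹
        + conj (τ * b') * conj b' * conj a⁻¹ * conj a⁻¹ / 2) * (a - b)
      + (-(a' * conj a⁻¹) + (a / conj a) * conj a' * conj a⁻¹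
        - a' * conj (τ * a' + τ * b') * conj a⁻¹ * conj a⁻¹ / 2
        + (a / conj a) * conj a' * conj (τ * a' + τ * b') * conj a⁻¹ * conj a⁻¹
        - (a / conj a) * conj (N1 - a' + (N2 - b')) * conj a⁻¹ / 2
        - (b / conj b) * conj b' * conj a⁻¹
        - (b / conj b) * conj (τ * b') * conj b' * conj a⁻¹ * conj b⁻¹ / 2
        - (b / conj b) * conj (τ * b') * conj b' * conj a⁻¹ * conj a⁻¹ / 2) * conj (a - b) := by
  have hac : conj a ≠ 0 := by simpa using ha
  have hbc : conj b ≠ 0 := by simpa using hb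
  have hτc : (τ : ℂ) ≠ 0 := by exact_mod_cast hτ
  unfold FF PD
  simp only [map_add, map_sub, map_mul, map_inv₀, Complex.conj_ofReal]
  generalize conj a = x at *
  generalize conj b = y at *
  generalize conj a' = x' at *
  generalize conj b' = y' at *
  generalize conj N1 = n1 at *
  generalize conj N2 = n2 at *
  field_simp
  ring

set_option maxHeartbeats 1000000 in
lemma rem_bound {a b a' b' N1 N2 : ℂ} {τ l A : ℝ} (hτ : τ ≠ 0) (hτp : |τ| ≤ π) (hl : 0 < l)
    (ha : l ≤ ‖a‖) (hb : l ≤ ‖b‖) (haA : ‖a‖ ≤ A) 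
    (hm1 : ‖τ * a'‖ ≤ 2 * A) (hm2 : ‖τ * b'‖ ≤ 2 * A) :
    ‖FF a (a + τ * a') τ - FF b (b + τ * b') τ - PD a b a' b' N1 N2 τ‖ ≤
      (20 * A / l ^ 2 * (‖a'‖ + ‖b'‖ + ‖N1‖ + ‖N2‖) + 4) * ‖a - b‖ := by
  have ha0 : a ≠ 0 := by rw [← norm_pos_iff]; linarith
  have hb0 : b ≠ 0 := by rw [← norm_pos_iff]; linarith
  have hA0 : 0 < A := by linarith
  rw [rem_eq ha0 hb0 hτ]
  set T := ‖a'‖ + ‖b'‖ + ‖N1‖ + ‖N2‖ with hT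
  have hT0 : 0 ≤ T := by positivity
  set p := 1 / l with hp
  have hp0 : 0 < p := by positivity
  have hu : ‖a⁻¹‖ ≤ p := by rw [norm_inv, hp, one_div]; gcongr
  have hv : ‖b⁻¹‖ ≤ p := by rw [norm_inv, hp, one_div]; gcongr
  have huc : ‖conj a⁻¹‖ ≤ p := by rw [Complex.norm_conj]; exact hu
  have hvc : ‖conj b⁻¹‖ ≤ p := by rw [Complex.norm_conj]; exact hv
  have he : ‖a / conj a‖ = 1 := by
    rw [norm_div, Complex.norm_conj]; exact div_self (by simpa using ha0)
  have hf : ‖b / conj b‖ = 1 := by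
    rw [norm_div, Complex.norm_conj]; exact div_self (by simpa using hb0)
  have hn1 := norm_nonneg N1
  have hn2 := norm_nonneg N2
  have hna := norm_nonneg a'
  have hnb := norm_nonneg b'
  have ha' : ‖a'‖ ≤ T := by linarith
  have hb' : ‖b'‖ ≤ T := by linarith
  have hac' : ‖conj a'‖ ≤ T := by rw [Complex.norm_conj]; exact ha'
  have hbc' : ‖conj b'‖ ≤ T := by rw [Complex.norm_conj]; exact hb'
  have hN : ‖N1 - a' + (N2 - b')‖ ≤ T := by
    refine (norm_add_le _ _).trans ?_
    have h1 := norm_sub_le N1 a'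
    have h2 := norm_sub_le N2 b'
    linarith
  have hNc : ‖conj (N1 - a' + (N2 - b'))‖ ≤ T := by rw [Complex.norm_conj]; exact hN
  have hmu : ‖τ * a' + τ * b'‖ ≤ 4 * A := (norm_add_le _ _).trans (by linarith)
  have hmuc : ‖conj (τ * a' + τ * b')‖ ≤ 4 * A := by rw [Complex.norm_conj]; exact hmu
  have hm2c : ‖conj (τ * b')‖ ≤ 2 * A := by rw [Complex.norm_conj]; exact hm2
  generalize hea : a / conj a = e at *
  generalize heb : b / conj b = f at *
  generalize conj a⁻¹ = uc at *
  generalize conj b⁻¹ = vc at *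
  generalize a⁻¹ = u at *
  generalize b⁻¹ = v at *
  generalize conj (N1 - a' + (N2 - b')) = nc at *
  generalize N1 - a' + (N2 - b') = n at *
  generalize conj (τ * a' + τ * b') = muc at *
  generalize τ * a' + τ * b' = mu at *
  generalize conj (τ * b') = mc at *
  generalize (τ : ℂ) * b' = m at *
  generalize conj a' = ac at *
  generalize conj b' = bc at *
  have h2 : ‖(2 : ℂ)‖ = 2 := by simp
  have hk : ‖(kap τ : ℂ)‖ ≤ 4 := by
    rw [Complex.norm_real, Real.norm_eq_abs]; exact kap_bound hτp
  have x1 : ‖n * u / 2‖ ≤ T * p / 2 := by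
    rw [norm_div, norm_mul, h2]; gcongr
  have x2 : ‖mu * a' * u * u / 2‖ ≤ 4 * A * T * p * p / 2 := by
    simp only [norm_div, norm_mul, h2]; gcongr
  have x3 : ‖m * b' * u * v / 2‖ ≤ 2 * A * T * p * p / 2 := by
    simp only [norm_div, norm_mul, h2]; gcongr
  have x4 : ‖bc * uc‖ ≤ T * p := by
    simp only [norm_mul]; gcongr
  have x5 : ‖mc * bc * uc * uc / 2‖ ≤ 2 * A * T * p * p / 2 := by
    simp only [norm_div, norm_mul, h2]; gcongr
  have y1 : ‖a' * uc‖ ≤ T * p := by simp only [norm_mul]; gcongr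
  have y2 : ‖e * ac * uc‖ ≤ 1 * T * p := by simp only [norm_mul, he]; gcongr
  have y3 : ‖a' * muc * uc * uc / 2‖ ≤ T * (4 * A) * p * p / 2 := by
    simp only [norm_div, norm_mul, h2]; gcongr
  have y4 : ‖e * ac * muc * uc * uc‖ ≤ 1 * T * (4 * A) * p * p := by
    simp only [norm_mul, he]; gcongr
  have y5 : ‖e * nc * uc / 2‖ ≤ 1 * T * p / 2 := by
    simp only [norm_div, norm_mul, h2, he]; gcongr
  have y6 : ‖f * bc * uc‖ ≤ 1 * T * p := by simp only [norm_mul, hf]; gcongr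
  have y7 : ‖f * mc * bc * uc * vc / 2‖ ≤ 1 * (2 * A) * T * p * p / 2 := by
    simp only [norm_div, norm_mul, h2, hf]; gcongr
  have y8 : ‖f * mc * bc * uc * uc / 2‖ ≤ 1 * (2 * A) * T * p * p / 2 := by
    simp only [norm_div, norm_mul, h2, hf]; gcongr
  have hAp : T * p ≤ A * T * p * p := by
    have : 1 ≤ A * p := by rw [hp, mul_one_div, le_div_iff₀ hl]; linarith
    calc T * p = 1 * (T * p) := by ring
      _ ≤ (A * p) * (T * p) := by gcongr
      _ = _ := by ring
  have hW0 : 0 ≤ A * T * p * p := by positivity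
  generalize hW : A * T * p * p = W at *
  have w2 : 4 * A * T * p * p / 2 = 2 * W := by rw [← hW]; ring
  have w3 : 2 * A * T * p * p / 2 = W := by rw [← hW]; ring
  have w4 : T * (4 * A) * p * p / 2 = 2 * W := by rw [← hW]; ring
  have w5 : 1 * T * (4 * A) * p * p = 4 * W := by rw [← hW]; ring
  have w6 : 1 * (2 * A) * T * p * p / 2 = W := by rw [← hW]; ring
  rw [w2] at x2
  rw [w3] at x3 x5
  rw [w4] at y3
  rw [w5] at y4
  rw [w6] at y7 y8
  rw [one_mul] at y2 y5 y6
  have hX : ‖kap τ - n * u / 2 + mu * a' * u * u / 2 - m * b' * u * v / 2 + bc * uc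
      + mc * bc * uc * uc / 2‖ ≤ 4 + 6 * (W) := by
    have z1 := norm_sub_le (kap τ : ℂ) (n * u / 2)
    have z2 := norm_add_le (kap τ - n * u / 2) (mu * a' * u * u / 2)
    have z3 := norm_sub_le (kap τ - n * u / 2 + mu * a' * u * u / 2) (m * b' * u * v / 2)
    have z4 := norm_add_le (kap τ - n * u / 2 + mu * a' * u * u / 2 - m * b' * u * v / 2) (bc * uc)
    have z5 := norm_add_le (kap τ - n * u / 2 + mu * a' * u * u / 2 - m * b' * u * v / 2 + bc * uc)
      (mc * bc * uc * uc / 2)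
    linarith
  have hXc : ‖-(a' * uc) + e * ac * uc - a' * muc * uc * uc / 2 + e * ac * muc * uc * uc
      - e * nc * uc / 2 - f * bc * uc - f * mc * bc * uc * vc / 2 - f * mc * bc * uc * uc / 2‖
      ≤ 14 * (W) := by
    have z1 := norm_add_le (-(a' * uc)) (e * ac * uc)
    rw [norm_neg] at z1
    have z2 := norm_sub_le (-(a' * uc) + e * ac * uc) (a' * muc * uc * uc / 2)
    have z3 := norm_add_le (-(a' * uc) + e * ac * uc - a' * muc * uc * uc / 2)
      (e * ac * muc * uc * uc)
    have z4 := norm_sub_le (-(a' * uc) + e * ac * uc - a' * muc * uc * uc / 2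
      + e * ac * muc * uc * uc) (e * nc * uc / 2)
    have z5 := norm_sub_le (-(a' * uc) + e * ac * uc - a' * muc * uc * uc / 2
      + e * ac * muc * uc * uc - e * nc * uc / 2) (f * bc * uc)
    have z6 := norm_sub_le (-(a' * uc) + e * ac * uc - a' * muc * uc * uc / 2
      + e * ac * muc * uc * uc - e * nc * uc / 2 - f * bc * uc) (f * mc * bc * uc * vc / 2)
    have z7 := norm_sub_le (-(a' * uc) + e * ac * uc - a' * muc * uc * uc / 2
      + e * ac * muc * uc * uc - e * nc * uc / 2 - f * bc * uc - f * mc * bc * uc * vc / 2)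
      (f * mc * bc * uc * uc / 2)
    linarith
  have hd : ‖conj (a - b)‖ = ‖a - b‖ := Complex.norm_conj _
  refine (norm_add_le _ _).trans ?_
  rw [norm_mul, norm_mul, hd, ← add_mul]
  refine mul_le_mul_of_nonneg_right ?_ (norm_nonneg _)
  have : 20 * A / l ^ 2 * T = 20 * W := by rw [← hW, hp]; field_simp
  rw [this]
  linarith

lemma PHI_bound {a b M1 M2 : ℂ} {l A : ℝ} (hl : 0 < l) (ha : l ≤ ‖a‖) 
    (haA : ‖a‖ ≤ A) (hbA : ‖b‖ ≤ A) (h1 : ‖M1‖ ≤ A) (h2 : ‖M2‖ ≤ A) :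
    ‖PHI a b M1 M2‖ ≤ 6 * A ^ 2 / l ^ 2 * ‖a - b‖ := by
  have ha0 : a ≠ 0 := by rw [← norm_pos_iff]; linarith
  have hA0 : 0 < A := by linarith
  have hn : 0 < ‖a‖ := by linarith
  have hmu : ‖M1 - a + (M2 - b)‖ ≤ 4 * A := by
    refine (norm_add_le _ _).trans ?_
    have h1 := norm_sub_le M1 a
    have h2 := norm_sub_le M2 b
    linarith
  have hd : ‖conj (a - b)‖ = ‖a - b‖ := Complex.norm_conj _
  have t : ‖M1 - a + (M2 - b)‖ / (2 * ‖a‖) ≤ 2 * A / l := by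
    calc _ ≤ 4 * A / (2 * l) := by gcongr
      _ = _ := by field_simp; ring
  unfold PHI
  have n1 : ‖(M1 - a + (M2 - b)) / (2 * a) * (a - b)‖ ≤ 2 * A / l * ‖a - b‖ := by
    rw [norm_mul, norm_div, norm_mul, Complex.norm_ofNat]
    gcongr
  have n2 : ‖a / conj a * conj (a - b)‖ = ‖a - b‖ := by
    rw [norm_mul, hd, norm_div, Complex.norm_conj, div_self hn.ne', one_mul]
  have n3 : ‖a / (2 * conj a ^ 2) * conj (M1 - a + (M2 - b)) * conj (a - b)‖ ≤
      2 * A / l * ‖a - b‖ := by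
    rw [norm_mul, hd, norm_mul, norm_div, norm_mul, norm_pow, Complex.norm_conj, Complex.norm_conj,
      Complex.norm_ofNat]
    gcongr
    refine le_trans (le_of_eq ?_) t
    field_simp
  have q : 1 ≤ A / l := by rw [le_div_iff₀ hl]; linarith
  have q2 : 2 + 4 * (A / l) ≤ 6 * (A / l) ^ 2 := by nlinarith
  have z1 := norm_add_le (a - b) ((M1 - a + (M2 - b)) / (2 * a) * (a - b))
  have z2 := norm_add_le ((a - b) + (M1 - a + (M2 - b)) / (2 * a) * (a - b))
    (a / conj a * conj (a - b))
  have z3 := norm_add_le ((a - b) + (M1 - a + (M2 - b)) / (2 * a) * (a - b)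
    + a / conj a * conj (a - b)) (a / (2 * conj a ^ 2) * conj (M1 - a + (M2 - b)) * conj (a - b))
  have e : 6 * A ^ 2 / l ^ 2 * ‖a - b‖ = 6 * (A / l) ^ 2 * ‖a - b‖ := by rw [div_pow]; ring
  have e2 : 2 * A / l * ‖a - b‖ = 2 * (A / l) * ‖a - b‖ := by ring
  rw [e]
  rw [e2] at n1 n3
  nlinarith [mul_le_mul_of_nonneg_right q2 (norm_nonneg (a - b))]

lemma hasDerivAt_conj {f : ℝ → ℂ} {f' : ℂ} {x : ℝ} (h : HasDerivAt f f' x) :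
    HasDerivAt (fun t => conj (f t)) (conj f') x := by
  have := h.star
  exact this

lemma PHI_deriv {a b M1 M2 : ℝ → ℂ} {a' b' N1 N2 : ℂ} {τ : ℝ} (ha : HasDerivAt a a' τ)
    (hb : HasDerivAt b b' τ) (h1 : HasDerivAt M1 N1 τ) (h2 : HasDerivAt M2 N2 τ)
    (ha0 : a τ ≠ 0) (e1 : M1 τ = a τ + τ * a') (e2 : M2 τ = b τ + τ * b') :
    HasDerivAt (fun t => PHI (a t) (b t) (M1 t) (M2 t)) (PD (a τ) (b τ) a' b' N1 N2 τ) τ := by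
  have hac : conj (a τ) ≠ 0 := by simpa using ha0
  have hd := ha.sub hb
  have hdc := hasDerivAt_conj hd
  have hmu := (h1.sub ha).add (h2.sub hb)
  have hmuc := hasDerivAt_conj hmu
  have hca := hasDerivAt_conj ha
  have t2 := (hmu.div (ha.const_mul 2) (mul_ne_zero two_ne_zero ha0)).mul hd
  have t3 := (ha.div hca hac).mul hdc
  have t4 := ((ha.div ((hca.pow 2).const_mul 2)
    (mul_ne_zero two_ne_zero (pow_ne_zero 2 hac))).mul hmuc).mul hdc
  have tot := ((hd.add t2).add t3).add t4
  unfold PHI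
  refine HasDerivAt.congr_deriv tot ?_
  simp only [Pi.add_apply, Pi.sub_apply, Pi.mul_apply, Pi.div_apply, Pi.pow_apply]
  rw [e1, e2]
  unfold PD
  have c1 : a τ + ↑τ * a' - a τ + (b τ + ↑τ * b' - b τ) = τ * a' + τ * b' := by ring
  simp only [c1]
  generalize conj (↑τ * a' + ↑τ * b') = muc
  generalize τ * a' + τ * b' = mu
  generalize conj (a τ - b τ) = dc
  generalize conj (a' - b') = dc'
  generalize conj (N1 - a' + (N2 - b')) = nc
  generalize conj (a τ) = ac at *
  field_simp
  push_cast
  ring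

/-- data of a twice continuously differentiable well stretched curve -/
structure C2 (Y Y' Y'' : ℝ → ℂ) (K l : ℝ) : Prop where
  h : Crv Y Y'
  h' : Crv Y' Y''
  H : Hol Y' K
  w : WS Y l

/-- difference quotient, extended by the derivative at zero -/
def Lx (Y Y' : ℝ → ℂ) (s : ℝ) : ℝ → ℂ := Function.update (Lq Y s) 0 (Y' s)

lemma Lx_of_ne {Y Y' : ℝ → ℂ} {s τ : ℝ} (hτ : τ ≠ 0) : Lx Y Y' s τ = Lq Y s τ := by
  unfold Lx; rw [Function.update_of_ne hτ]

lemma Lq_der {Y Y' : ℝ → ℂ} (h : Crv Y Y') {s τ : ℝ} (hτ : τ ≠ 0) :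
    HasDerivAt (Lq Y s) (Dq Y Y' s τ) τ := by
  have hτc : (τ : ℂ) ≠ 0 := by exact_mod_cast hτ
  have h1 : HasDerivAt (fun t => Y (s + t) - Y s) (Y' (s + τ)) τ :=
    ((h.der (s + τ)).comp_const_add s τ).sub_const _
  have h2 : HasDerivAt (fun t : ℝ => (t : ℂ)) 1 τ := by
    exact (hasDerivAt_id τ).ofReal_comp
  have h3 := h1.div h2 hτc
  refine HasDerivAt.congr_deriv h3 ?_
  unfold Dq
  field_simp

lemma Lx_der {Y Y' : ℝ → ℂ} (h : Crv Y Y') {s τ : ℝ} (hτ : τ ≠ 0) :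
    HasDerivAt (Lx Y Y' s) (Dq Y Y' s τ) τ := by
  refine (Lq_der h hτ).congr_of_eventuallyEq ?_
  filter_upwards [isOpen_ne.mem_nhds hτ] with t ht
  exact Lx_of_ne ht

lemma Lq_lim {Y Y' : ℝ → ℂ} (h : Crv Y Y') (s : ℝ) :
    Tendsto (Lq Y s) (𝓝[≠] 0) (𝓝 (Y' s)) := by
  have := hasDerivAt_iff_tendsto_slope_zero.1 (h.der s)
  refine this.congr fun t => ?_
  unfold Lq
  rw [Complex.real_smul, div_eq_mul_inv, mul_comm, Complex.ofReal_inv]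

lemma Lx_cont {Y Y' : ℝ → ℂ} (h : Crv Y Y') (s : ℝ) : Continuous (Lx Y Y' s) := by
  rw [continuous_iff_continuousAt]
  intro τ
  rcases eq_or_ne τ 0 with rfl | hτ
  · unfold Lx
    rw [continuousAt_update_same]
    exact Lq_lim h s
  · exact (Lx_der h hτ).continuousAt

lemma deriv_low {Y Y' : ℝ → ℂ} (h : Crv Y Y') {l : ℝ} (hw : WS Y l) (s : ℝ) : l ≤ ‖Y' s‖ := by
  refine ge_of_tendsto (Lq_lim h s).norm ?_
  have h1 : ∀ᶠ t : ℝ in 𝓝[≠] 0, t ≠ 0 := self_mem_nhdsWithin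
  have h2 : ∀ᶠ t : ℝ in 𝓝[≠] 0, |t| ≤ π := by
    apply nhdsWithin_le_nhds
    filter_upwards [Metric.closedBall_mem_nhds (0 : ℝ) pi_pos] with t ht
    simpa using ht
  filter_upwards [h1, h2] with t ht ht2
  exact Lq_low hw ht ht2

lemma Lx_low {Y Y' : ℝ → ℂ} (h : Crv Y Y') {l : ℝ} (hw : WS Y l) {s τ : ℝ} (hτp : |τ| ≤ π) :
    l ≤ ‖Lx Y Y' s τ‖ := by
  rcases eq_or_ne τ 0 with rfl | hτ
  · unfold Lx; rw [Function.update_self]; exact deriv_low h hw s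
  · rw [Lx_of_ne hτ]; exact Lq_low hw hτ hτp

lemma Y'_eq {Y Y' : ℝ → ℂ} {s τ : ℝ} (hτ : τ ≠ 0) :
    Y' (s + τ) = Lq Y s τ + τ * Dq Y Y' s τ := by
  have hτc : (τ : ℂ) ≠ 0 := by exact_mod_cast hτ
  unfold Lq Dq
  field_simp
  ring

lemma Dq_bound {Y Y' : ℝ → ℂ} (h : Crv Y Y') {K : ℝ} (hK : 0 ≤ K) (hH : Hol Y' K) {s τ : ℝ}
    (hτ : τ ≠ 0) (hτp : |τ| ≤ π) : ‖Dq Y Y' s τ‖ ≤ K * |τ| ^ (-(1 / 2) : ℝ) := by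
  have h1 := m_bound h hK hH (s := s) hτ hτp
  have e : √|τ| / |τ| = |τ| ^ (-(1 / 2) : ℝ) := by
    rw [Real.sqrt_eq_rpow, ← Real.rpow_sub_one (abs_pos.2 hτ).ne']; norm_num
  unfold Dq
  unfold Lq at h1
  rw [norm_div, Complex.norm_real, Real.norm_eq_abs, ← e, ← mul_div_assoc]
  gcongr

/-- the majorant of the remainder -/
def GG (Y1 Y1' Y1'' Y2 Y2' Y2'' : ℝ → ℂ) (K l s τ : ℝ) : ℝ :=
  (20 * (2 * K) / l ^ 2 * (‖Dq Y1 Y1' s τ‖ + ‖Dq Y2 Y2' s τ‖ + ‖Y1'' (s + τ)‖ + ‖Y2'' (s + τ)‖) + 4)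
    * ‖Lq Y1 s τ - Lq Y2 s τ‖

lemma Lq_meas {Y : ℝ → ℂ} (h : Measurable Y) : Measurable (fun x : ℝ × ℝ => Lq Y x.1 x.2) := by
  unfold Lq; fun_prop

lemma Dq_meas {Y Y' : ℝ → ℂ} (h : Measurable Y) (h' : Measurable Y') :
    Measurable (fun x : ℝ × ℝ => Dq Y Y' x.1 x.2) := by
  unfold Dq; fun_prop

lemma GG_meas {Y1 Y1' Y1'' Y2 Y2' Y2'' : ℝ → ℂ} {K l : ℝ} (c1 : C2 Y1 Y1' Y1'' K l)
    (c2 : C2 Y2 Y2' Y2'' K l) :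
    Measurable (fun x : ℝ × ℝ => GG Y1 Y1' Y1'' Y2 Y2' Y2'' K l x.1 x.2) := by
  have a1 := Lq_meas c1.h.cont.measurable
  have a2 := Lq_meas c2.h.cont.measurable
  have a3 := Dq_meas c1.h.cont.measurable c1.h.cont'.measurable
  have a4 := Dq_meas c2.h.cont.measurable c2.h.cont'.measurable
  have a5 := c1.h'.cont'.measurable
  have a6 := c2.h'.cont'.measurable
  unfold GG
  fun_prop

lemma ae_ne_zero_imp {p : ℝ → Prop} (h : ∀ τ, τ ≠ 0 → |τ| ≤ π → p τ) :
    ∀ᵐ τ ∂(volume.restrict (Set.uIoc (-π) π)), p τ := by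
  have hpi := pi_pos
  rw [ae_restrict_iff' measurableSet_uIoc]
  have : ∀ᵐ τ : ℝ, τ ≠ 0 := by simp [ae_iff]
  filter_upwards [this] with τ hτ hτ2
  rw [Set.uIoc_of_le (by linarith)] at hτ2
  exact h τ hτ (abs_le.2 ⟨hτ2.1.le, hτ2.2⟩)

lemma bdd_of_crv {Y Y' : ℝ → ℂ} (h : Crv Y Y') : ∃ B, ∀ s, ‖Y' s‖ ≤ B := by
  obtain ⟨B, hB⟩ := isCompact_Icc.exists_bound_of_continuousOn (s := Set.Icc 0 (2 * π))
    h.cont'.continuousOn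
  refine ⟨B, fun s => ?_⟩
  obtain ⟨t, ht, e⟩ := h.per'.exists_mem_Ico₀ (by positivity) s
  rw [e]
  exact hB t ⟨ht.1, ht.2.le⟩

lemma GG_int {Y1 Y1' Y1'' Y2 Y2' Y2'' : ℝ → ℂ} {K l : ℝ} (hK : 0 ≤ K) (hl : 0 < l)
    (c1 : C2 Y1 Y1' Y1'' K l) (c2 : C2 Y2 Y2' Y2'' K l) (s : ℝ) :
    IntervalIntegrable (GG Y1 Y1' Y1'' Y2 Y2' Y2'' K l s) volume (-π) π := by
  obtain ⟨B1, hB1⟩ := bdd_of_crv c1.h'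
  obtain ⟨B2, hB2⟩ := bdd_of_crv c2.h'
  have hi : IntervalIntegrable (fun τ : ℝ => (20 * (2 * K) / l ^ 2 *
    (2 * K * |τ| ^ (-(1 / 2) : ℝ) + (B1 + B2)) + 4) * (2 * K + 2 * K)) volume (-π) π := by
    have := abs_rpow_integrable (r := -(1 / 2)) (by norm_num)
    exact ((((this.const_mul (2 * K)).add (by simp)).const_mul _).add (by simp)).mul_const _
  refine hi.mono_fun ((GG_meas c1 c2).comp measurable_prodMk_left).aestronglyMeasurable ?_
  refine ae_ne_zero_imp fun τ hτ hτp => ?_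
  refine le_trans ?_ (le_abs_self _)
  unfold GG
  simp only
  rw [Real.norm_eq_abs, abs_of_nonneg (by positivity)]
  have d1 := Dq_bound c1.h hK c1.H (s := s) hτ hτp
  have d2 := Dq_bound c2.h hK c2.H (s := s) hτ hτp
  have l1 := Lq_sup c1.h (sup_of_hol c1.h hK c1.H) s τ
  have l2 := Lq_sup c2.h (sup_of_hol c2.h hK c2.H) s τ
  have b1 := hB1 (s + τ)
  have b2 := hB2 (s + τ)
  have n := norm_sub_le (Lq Y1 s τ) (Lq Y2 s τ)
  have t : ‖Dq Y1 Y1' s τ‖ + ‖Dq Y2 Y2' s τ‖ + ‖Y1'' (s + τ)‖ + ‖Y2'' (s + τ)‖ ≤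
      2 * K * |τ| ^ (-(1 / 2) : ℝ) + (B1 + B2) := by linarith
  have t0 : 0 ≤ 2 * K * |τ| ^ (-(1 / 2) : ℝ) + (B1 + B2) := le_trans (by positivity) t
  have t1 : 0 ≤ 20 * (2 * K) / l ^ 2 * (2 * K * |τ| ^ (-(1 / 2) : ℝ) + (B1 + B2)) + 4 :=
    add_nonneg (mul_nonneg (by positivity) t0) (by norm_num)
  gcongr
  linarith

lemma PHI_cont {a b M1 M2 : ℝ → ℂ} {S : Set ℝ} (ha : Continuous a) (hb : Continuous b)
    (h1 : Continuous M1) (h2 : Continuous M2) (h0 : ∀ t ∈ S, a t ≠ 0) :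
    ContinuousOn (fun t => PHI (a t) (b t) (M1 t) (M2 t)) S := by
  intro t ht
  have h0 := h0 t ht
  have h0c : conj (a t) ≠ 0 := by simpa using h0
  have hcc := Complex.continuous_conj
  apply ContinuousAt.continuousWithinAt
  have k1 : ContinuousAt (fun t => (M1 t - a t + (M2 t - b t)) / (2 * a t)) t := by
    refine ContinuousAt.div (f := fun t => M1 t - a t + (M2 t - b t)) (g := fun t => 2 * a t) (by fun_prop) (by fun_prop) (mul_ne_zero two_ne_zero h0)
  have k2 : ContinuousAt (fun t => a t / conj (a t)) t := by
    refine ContinuousAt.div (f := a) (g := fun t => conj (a t)) (by fun_prop) (by fun_prop) h0c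
  have k3 : ContinuousAt (fun t => a t / (2 * conj (a t) ^ 2)) t := by
    refine ContinuousAt.div (f := a) (g := fun t => 2 * conj (a t) ^ 2) (by fun_prop) (by fun_prop)
      (mul_ne_zero two_ne_zero (pow_ne_zero _ h0c))
  unfold PHI
  have k4 : ContinuousAt (fun t => conj (a t - b t)) t := by fun_prop
  have k5 : ContinuousAt (fun t => conj (M1 t - a t + (M2 t - b t))) t := by fun_prop
  have k6 : ContinuousAt (fun t => a t - b t) t := by fun_prop
  exact ((k6.add (k1.mul k6)).add (k2.mul k4)).add ((k3.mul k5).mul k4)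

/-- The pointwise estimate for smooth curves. -/
lemma ptw {Y1 Y1' Y1'' Y2 Y2' Y2'' : ℝ → ℂ} {K l : ℝ} (hK : 0 ≤ K) (hl : 0 < l)
    (c1 : C2 Y1 Y1' Y1'' K l) (c2 : C2 Y2 Y2' Y2'' K l) (s : ℝ) :
    ‖(∫ τ in (-π)..π, FI Y1 Y1' s τ) - ∫ τ in (-π)..π, FI Y2 Y2' s τ‖ ≤
      6 * (2 * K) ^ 2 / l ^ 2 * (‖Lq Y1 s π - Lq Y2 s π‖ + ‖Lq Y1 s (-π) - Lq Y2 s (-π)‖) +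
      ∫ τ in (-π)..π, GG Y1 Y1' Y1'' Y2 Y2' Y2'' K l s τ := by
  have hpi := pi_pos
  have f1 := FI_int c1.h hK c1.H hl c1.w s
  have f2 := FI_int c2.h hK c2.H hl c2.w s
  have hG := GG_int hK hl c1 c2 s
  have A1 := sup_of_hol c1.h hK c1.H
  have A2 := sup_of_hol c2.h hK c2.H
  set P : ℝ → ℂ := fun τ => PD (Lq Y1 s τ) (Lq Y2 s τ) (Dq Y1 Y1' s τ) (Dq Y2 Y2' s τ)
    (Y1'' (s + τ)) (Y2'' (s + τ)) τ with hP
  have hrem : ∀ τ, τ ≠ 0 → |τ| ≤ π →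
      ‖FI Y1 Y1' s τ - FI Y2 Y2' s τ - P τ‖ ≤ GG Y1 Y1' Y1'' Y2 Y2' Y2'' K l s τ := by
    intro τ hτ hτp
    unfold FI
    have e1 := Y'_eq (Y := Y1) (Y' := Y1') (s := s) hτ
    have e2 := Y'_eq (Y := Y2) (Y' := Y2') (s := s) hτ
    have u1 := Lq_sup c1.h A1 s τ
    have u2 := Lq_sup c2.h A2 s τ
    have m1 : ‖τ * Dq Y1 Y1' s τ‖ ≤ 2 * (2 * K) := by
      have : τ * Dq Y1 Y1' s τ = Y1' (s + τ) - Lq Y1 s τ := by rw [e1]; ring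
      rw [this]
      have := norm_sub_le (Y1' (s + τ)) (Lq Y1 s τ)
      linarith [A1 (s + τ)]
    have m2 : ‖τ * Dq Y2 Y2' s τ‖ ≤ 2 * (2 * K) := by
      have : τ * Dq Y2 Y2' s τ = Y2' (s + τ) - Lq Y2 s τ := by rw [e2]; ring
      rw [this]
      have := norm_sub_le (Y2' (s + τ)) (Lq Y2 s τ)
      linarith [A2 (s + τ)]
    rw [e1, e2]
    exact rem_bound hτ hτp hl (Lq_low c1.w hτ hτp) (Lq_low c2.w hτ hτp) u1 m1 m2
  have hPm : Measurable P := by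
    have a1 := (Lq_meas c1.h.cont.measurable).comp (measurable_prodMk_left (x := s))
    have a2 := (Lq_meas c2.h.cont.measurable).comp (measurable_prodMk_left (x := s))
    have a3 := (Dq_meas c1.h.cont.measurable c1.h.cont'.measurable).comp
      (measurable_prodMk_left (x := s))
    have a4 := (Dq_meas c2.h.cont.measurable c2.h.cont'.measurable).comp
      (measurable_prodMk_left (x := s))
    have a5 := c1.h'.cont'.measurable
    have a6 := c2.h'.cont'.measurable
    have h4 : Measurable (fun z : ℂ => conj z) := Complex.continuous_conj.measurable
    simp only [Function.comp_def] at a1 a2 a3 a4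
    simp only [hP]
    unfold PD
    fun_prop
  have hPi : IntervalIntegrable P volume (-π) π := by
    refine ((f1.norm.add f2.norm).add hG).mono_fun hPm.aestronglyMeasurable ?_
    refine ae_ne_zero_imp fun τ hτ hτp => ?_
    refine le_trans ?_ (le_abs_self _)
    have h1 := hrem τ hτ hτp
    have h2 := norm_sub_le (FI Y1 Y1' s τ) (FI Y2 Y2' s τ)
    have h3 := norm_sub_le (FI Y1 Y1' s τ - FI Y2 Y2' s τ) (FI Y1 Y1' s τ - FI Y2 Y2' s τ - P τ)
    rw [sub_sub_cancel] at h3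
    simp only
    linarith
  set Φ : ℝ → ℂ := fun t => PHI (Lx Y1 Y1' s t) (Lx Y2 Y2' s t) (Y1' (s + t)) (Y2' (s + t))
    with hΦ
  have hne : ∀ t ∈ Set.uIcc (-π) π, Lx Y1 Y1' s t ≠ 0 := by
    intro t ht
    rw [Set.uIcc_of_le (by linarith)] at ht
    have := Lx_low c1.h c1.w (s := s) (abs_le.2 ht)
    rw [← norm_pos_iff]; linarith
  have hc1 := c1.h.cont'
  have hc2 := c2.h.cont'
  have ftc : ∫ τ in (-π)..π, P τ = Φ π - Φ (-π) := by
    apply MeasureTheory.integral_eq_of_hasDerivAt_off_countable Φ P (s := {0})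
      (Set.countable_singleton 0)
    · exact PHI_cont (Lx_cont c1.h s) (Lx_cont c2.h s) (by fun_prop) (by fun_prop) hne
    · rintro τ ⟨hτ, hτ0⟩
      have hτ0 : τ ≠ 0 := hτ0
      rw [min_eq_left (by linarith), max_eq_right (by linarith)] at hτ
      have := PHI_deriv (Lx_der c1.h hτ0) (Lx_der c2.h hτ0)
        ((c1.h'.der (s + τ)).comp_const_add s τ) ((c2.h'.der (s + τ)).comp_const_add s τ)
        (hne τ (by rw [Set.uIcc_of_le (by linarith)]; exact ⟨hτ.1.le, hτ.2.le⟩))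
        (by rw [Lx_of_ne hτ0]; exact Y'_eq hτ0) (by rw [Lx_of_ne hτ0]; exact Y'_eq hτ0)
      rw [Lx_of_ne hτ0, Lx_of_ne hτ0] at this
      exact this
    · exact hPi
  have bd : ∀ t, t ≠ 0 → |t| ≤ π →
      ‖Φ t‖ ≤ 6 * (2 * K) ^ 2 / l ^ 2 * ‖Lq Y1 s t - Lq Y2 s t‖ := by
    intro t ht htp
    simp only [hΦ]
    rw [Lx_of_ne ht, Lx_of_ne ht]
    exact PHI_bound hl (Lq_low c1.w ht htp) (Lq_sup c1.h A1 s t) (Lq_sup c2.h A2 s t) (A1 _) (A2 _)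
  have b1 := bd π hpi.ne' (by rw [abs_of_pos hpi])
  have b2 := bd (-π) (neg_ne_zero.2 hpi.ne') (by rw [abs_neg, abs_of_pos hpi])
  have e : (∫ τ in (-π)..π, FI Y1 Y1' s τ) - ∫ τ in (-π)..π, FI Y2 Y2' s τ =
      (Φ π - Φ (-π)) + ∫ τ in (-π)..π, (FI Y1 Y1' s τ - FI Y2 Y2' s τ - P τ) := by
    rw [intervalIntegral.integral_sub (f1.sub f2) hPi, intervalIntegral.integral_sub f1 f2, ftc]
    ring
  have r : ‖∫ τ in (-π)..π, (FI Y1 Y1' s τ - FI Y2 Y2' s τ - P τ)‖ ≤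
      ∫ τ in (-π)..π, GG Y1 Y1' Y1'' Y2 Y2' Y2'' K l s τ := by
    refine intervalIntegral.norm_integral_le_of_norm_le (by linarith) ?_ hG
    have := ae_ne_zero_imp hrem
    rw [ae_restrict_iff' measurableSet_uIoc, Set.uIoc_of_le (by linarith)] at this
    exact this
  rw [e]
  have n1 := norm_add_le (Φ π - Φ (-π)) (∫ τ in (-π)..π, (FI Y1 Y1' s τ - FI Y2 Y2' s τ - P τ))
  have n2 := norm_sub_le (Φ π) (Φ (-π))
  rw [mul_add]
  linarith

lemma cs_lint {α : Type*} [MeasurableSpace α] (μ : Measure α) {f g : α → ℝ≥0∞}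
    (hf : AEMeasurable f μ) (hg : AEMeasurable g μ) :
    (∫⁻ a, f a * g a ∂μ) ^ 2 ≤ (∫⁻ a, f a ^ 2 ∂μ) * ∫⁻ a, g a ^ 2 ∂μ := by
  have h := ENNReal.lintegral_mul_le_Lp_mul_Lq μ
    (p := 2) (q := 2) ⟨by norm_num, by norm_num, by norm_num⟩ hf hg
  have e : ∀ x : ℝ≥0∞, (x ^ (1 / (2 : ℝ))) ^ 2 = x := fun x => by
    rw [← ENNReal.rpow_natCast, ← ENNReal.rpow_mul]; norm_num
  have h2 : (∫⁻ a, f a * g a ∂μ) ^ 2 ≤ _ := pow_le_pow_left' h 2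
  rw [mul_pow, e, e] at h2
  simpa using h2

/-- the total mass of the weight -/
def Wt (ε : ℝ) : ℝ := ∫ τ in (-π)..π, |τ| ^ (ε - 1)

lemma Wt_nonneg (ε : ℝ) : 0 ≤ Wt ε :=
  intervalIntegral.integral_nonneg (by linarith [pi_pos]) fun s _ => by positivity

lemma Wt_lint {ε : ℝ} (hε : 0 < ε) :
    ∫⁻ τ in Set.Ioc (-π) π, ENNReal.ofReal (|τ| ^ (ε - 1)) = ENNReal.ofReal (Wt ε) := by
  unfold Wt
  have hpi := pi_pos
  have h := abs_rpow_integrable (r := ε - 1) (by linarith)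
  rw [intervalIntegrable_iff_integrableOn_Ioc_of_le (by linarith)] at h
  rw [intervalIntegral.integral_of_le (by linarith), ofReal_integral_eq_lintegral_ofReal h]
  exact Eventually.of_forall fun x => by positivity

lemma mink {G : ℝ → ℝ → ℝ} (hG : Measurable (fun x : ℝ × ℝ => G x.1 x.2)) {M ε : ℝ} (hε : 0 < ε)
    (hM0 : 0 ≤ M)
    (hM : ∀ τ, τ ≠ 0 → |τ| ≤ π → ∫⁻ s in Set.Ioc (-π) π, ENNReal.ofReal (G s τ) ^ 2 ≤
      ENNReal.ofReal (M * |τ| ^ (2 * ε - 2))) :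
    ∫⁻ s in Set.Ioc (-π) π, (∫⁻ τ in Set.Ioc (-π) π, ENNReal.ofReal (G s τ)) ^ 2 ≤
      ENNReal.ofReal (M * Wt ε ^ 2) := by
  have hpi := pi_pos
  set ν := (volume : Measure ℝ).restrict (Set.Ioc (-π) π) with hν
  have hae : ∀ {p : ℝ → Prop}, (∀ τ, τ ≠ 0 → |τ| ≤ π → p τ) → ∀ᵐ τ ∂ν, p τ := by
    intro p hp
    have := ae_ne_zero_imp hp
    rwa [Set.uIoc_of_le (by linarith)] at this
  set a : ℝ → ℝ≥0∞ := fun τ => ENNReal.ofReal (|τ| ^ ((ε - 1) / 2)) with ha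
  set b : ℝ → ℝ → ℝ≥0∞ := fun s τ => ENNReal.ofReal (|τ| ^ (-((ε - 1) / 2))) *
    ENNReal.ofReal (G s τ) with hb
  have ham : Measurable a := by simp only [ha]; fun_prop
  have hbm : Measurable (fun x : ℝ × ℝ => b x.1 x.2) := by simp only [hb]; fun_prop
  have ha2 : ∫⁻ τ, a τ ^ 2 ∂ν = ENNReal.ofReal (Wt ε) := by
    rw [← Wt_lint hε]
    refine lintegral_congr_ae (hae fun τ hτ hτp => ?_)
    simp only [ha]
    rw [← ENNReal.ofReal_pow (by positivity), ← Real.rpow_natCast, ← Real.rpow_mul (abs_nonneg _)]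
    congr 2; push_cast; ring
  have hs : ∀ s, (∫⁻ τ, ENNReal.ofReal (G s τ) ∂ν) ^ 2 ≤
      ENNReal.ofReal (Wt ε) * ∫⁻ τ, b s τ ^ 2 ∂ν := by
    intro s
    have e : ∫⁻ τ, ENNReal.ofReal (G s τ) ∂ν = ∫⁻ τ, a τ * b s τ ∂ν := by
      refine lintegral_congr_ae (hae fun τ hτ hτp => ?_)
      simp only [ha, hb]
      rw [← mul_assoc, ← ENNReal.ofReal_mul (by positivity), ← Real.rpow_add (abs_pos.2 hτ)]
      simp
    rw [e, ← ha2]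
    exact cs_lint ν ham.aemeasurable (hbm.comp measurable_prodMk_left).aemeasurable
  calc _ ≤ ∫⁻ s, ENNReal.ofReal (Wt ε) * ∫⁻ τ, b s τ ^ 2 ∂ν ∂ν := lintegral_mono hs
    _ = ENNReal.ofReal (Wt ε) * ∫⁻ s, ∫⁻ τ, b s τ ^ 2 ∂ν ∂ν := by
      rw [lintegral_const_mul' _ _ ENNReal.ofReal_ne_top]
    _ = ENNReal.ofReal (Wt ε) * ∫⁻ τ, ∫⁻ s, b s τ ^ 2 ∂ν ∂ν := by
      rw [lintegral_lintegral_swap]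
      exact (hbm.pow_const 2).aemeasurable
    _ ≤ ENNReal.ofReal (Wt ε) * ∫⁻ τ, ENNReal.ofReal M * ENNReal.ofReal (|τ| ^ (ε - 1)) ∂ν := by
      refine mul_le_mul' le_rfl ?_
      refine lintegral_mono_ae (hae fun τ hτ hτp => ?_)
      simp only [hb, mul_pow]
      rw [lintegral_const_mul' _ _ (by simp)]
      calc _ ≤ ENNReal.ofReal (|τ| ^ (-((ε - 1) / 2))) ^ 2 *
            ENNReal.ofReal (M * |τ| ^ (2 * ε - 2)) := by
            gcongr; exact hM τ hτ hτp
        _ = _ := by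
          rw [← ENNReal.ofReal_pow (by positivity), ← ENNReal.ofReal_mul (by positivity),
            ← ENNReal.ofReal_mul hM0]
          congr 1
          rw [← Real.rpow_natCast, ← Real.rpow_mul (abs_nonneg _), mul_left_comm,
            ← Real.rpow_add (abs_pos.2 hτ)]
          congr 2; push_cast; ring
    _ = _ := by
      rw [lintegral_const_mul' _ _ ENNReal.ofReal_ne_top, Wt_lint hε,
        ← ENNReal.ofReal_mul hM0, ← ENNReal.ofReal_mul (Wt_nonneg _)]
      congr 1; ring

lemma lint_of_int {f : ℝ → ℝ} (hf : Continuous f) (h0 : ∀ s, 0 ≤ f s) :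
    ∫⁻ s in Set.Ioc (-π) π, ENNReal.ofReal (f s) ^ 2 =
      ENNReal.ofReal (∫ s in (-π)..π, f s ^ 2) := by
  have hpi := pi_pos
  have h : IntervalIntegrable (fun s => f s ^ 2) volume (-π) π :=
    Continuous.intervalIntegrable (by fun_prop) _ _
  rw [intervalIntegrable_iff_integrableOn_Ioc_of_le (by linarith)] at h
  rw [intervalIntegral.integral_of_le (by linarith), ofReal_integral_eq_lintegral_ofReal h
    (Eventually.of_forall fun x => by positivity)]
  refine lintegral_congr fun s => ?_
  rw [ENNReal.ofReal_pow (h0 s)]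

lemma five_sq (c x1 x2 x3 x4 q : ℝ) :
    ((c * (x1 + x2 + x3 + x4) + 4) * q) ^ 2 ≤
      5 * (c ^ 2 * ((x1 * q) ^ 2 + (x2 * q) ^ 2 + (x3 * q) ^ 2 + (x4 * q) ^ 2) + 16 * q ^ 2) := by
  have h : (c * (x1 + x2 + x3 + x4) + 4) ^ 2 ≤
      5 * (c ^ 2 * (x1 ^ 2 + x2 ^ 2 + x3 ^ 2 + x4 ^ 2) + 16) := by
    nlinarith [sq_nonneg (c * x1 - c * x2), sq_nonneg (c * x1 - c * x3), sq_nonneg (c * x1 - c * x4),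
      sq_nonneg (c * x2 - c * x3), sq_nonneg (c * x2 - c * x4), sq_nonneg (c * x3 - c * x4),
      sq_nonneg (c * x1 - 4), sq_nonneg (c * x2 - 4), sq_nonneg (c * x3 - 4), sq_nonneg (c * x4 - 4)]
  calc _ = (c * (x1 + x2 + x3 + x4) + 4) ^ 2 * q ^ 2 := by ring
    _ ≤ (5 * (c ^ 2 * (x1 ^ 2 + x2 ^ 2 + x3 ^ 2 + x4 ^ 2) + 16)) * q ^ 2 := by gcongr
    _ = _ := by ring

/-- product constant -/
def Zc (σ : ℝ) : ℝ := 2 * ∑' k, zw σ k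

lemma Zc_nonneg (σ : ℝ) : 0 ≤ Zc σ := mul_nonneg (by norm_num) (tsum_nonneg fun k => zw_nonneg _ _)

/-- one product estimate -/
lemma prod_tau {f D : ℝ → ℂ} {θ δ ε τ c E : ℝ} (hθ : 0 ≤ θ) (hδ : 0 ≤ δ) (hsum : 1 / 2 < θ + δ)
    (h0 : 0 ≤ ε) (h1 : ε ≤ 1)
    (hf : Continuous f) (hD : Continuous D) (hDp : Function.Periodic D (2 * π))
    (hs : Summable (ws (δ + ε) D))
    (h : fc f 0 = 0 ∧ Summable (ws θ f) ∧ En θ f ≤ c ^ 2 * E) :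
    ∫ s in (-π)..π, (‖f s‖ * ‖D (s + τ) - D s‖) ^ 2 ≤
      Zc (θ + δ) * (c ^ 2 * E * ((2 * |τ| ^ ε) ^ 2 * En (δ + ε) D)) := by
  obtain ⟨a, b, d⟩ := diff_est hDp hD τ h0 h1 hs
  have := prod_est hθ hδ hsum hf (g := fun s => D (s + τ) - D s) (by fun_prop) h.1 a h.2.1 b
  simp only [norm_mul] at this
  refine this.trans ?_
  unfold Zc
  refine mul_le_mul_of_nonneg_left ?_ (Zc_nonneg _)
  exact mul_le_mul h.2.2 d (En_nonneg _ _) ((En_nonneg _ _).trans h.2.2)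

lemma int_lin {f1 f2 f3 f4 f5 : ℝ → ℝ} (h1 : Continuous f1) (h2 : Continuous f2)
    (h3 : Continuous f3) (h4 : Continuous f4) (h5 : Continuous f5) (c t : ℝ) :
    ∫ s in (-π)..π, 5 * (c * (f1 s + f2 s + f3 s + f4 s) + 16 * f5 s) * t =
      5 * (c * ((∫ s in (-π)..π, f1 s) + (∫ s in (-π)..π, f2 s) + (∫ s in (-π)..π, f3 s)
        + ∫ s in (-π)..π, f4 s) + 16 * ∫ s in (-π)..π, f5 s) * t := by
  have i1 := h1.intervalIntegrable (μ := volume) (-π) π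
  have i2 := h2.intervalIntegrable (μ := volume) (-π) π
  have i3 := h3.intervalIntegrable (μ := volume) (-π) π
  have i4 := h4.intervalIntegrable (μ := volume) (-π) π
  have i5 := h5.intervalIntegrable (μ := volume) (-π) π
  rw [intervalIntegral.integral_mul_const, intervalIntegral.integral_const_mul,
    intervalIntegral.integral_add ((((i1.add i2).add i3).add i4).const_mul c) (i5.const_mul 16),
    intervalIntegral.integral_const_mul, intervalIntegral.integral_const_mul,
    intervalIntegral.integral_add ((i1.add i2).add i3) i4,
    intervalIntegral.integral_add (i1.add i2) i3, intervalIntegral.integral_add i1 i2]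

/-- the constant of the `τ` estimate -/
def C0 (θ δ : ℝ) : ℝ := 20 * (32000 * Zc (θ + δ) + 256)

lemma Lq_sub_norm {Y1 Y2 : ℝ → ℂ} (s τ : ℝ) :
    ‖Lq Y1 s τ - Lq Y2 s τ‖ = ‖(Y1 (s + τ) - Y2 (s + τ)) - (Y1 s - Y2 s)‖ * |τ|⁻¹ := by
  have : Lq Y1 s τ - Lq Y2 s τ = ((Y1 (s + τ) - Y2 (s + τ)) - (Y1 s - Y2 s)) * (τ : ℂ)⁻¹ := by
    unfold Lq; ring
  rw [this, norm_mul, norm_inv, Complex.norm_real, Real.norm_eq_abs]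

lemma tau_est {Y1 Y1' Y1'' Y2 Y2' Y2'' : ℝ → ℂ} {K l θ δ ε : ℝ} (hK : 0 ≤ K) (hl : 0 < l)
    (c1 : C2 Y1 Y1' Y1'' K l) (c2 : C2 Y2 Y2' Y2'' K l)
    (hθ : 0 ≤ θ) (hδ : 0 ≤ δ) (hsum : 1 / 2 < θ + δ) (h0 : 0 ≤ ε) (h1 : ε ≤ 1)
    (hs1 : Summable (ws (2 + θ) Y1)) (hs2 : Summable (ws (2 + θ) Y2))
    (hE1 : En (2 + θ) Y1 ≤ K ^ 2) (hE2 : En (2 + θ) Y2 ≤ K ^ 2)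
    (hsD : Summable (ws (δ + ε) (fun s => Y1 s - Y2 s))) {τ : ℝ} (hτ : τ ≠ 0) :
    ∫ s in (-π)..π, GG Y1 Y1' Y1'' Y2 Y2' Y2'' K l s τ ^ 2 ≤
      C0 θ δ * (K ^ 4 / l ^ 4) * En (δ + ε) (fun s => Y1 s - Y2 s) * |τ| ^ (2 * ε - 2) := by
  have hpi := pi_pos
  have hD := c1.h.sub c2.h
  have k1 := c1.h.cont
  have k2 := c2.h.cont
  have k3 := c1.h.cont'
  have k4 := c2.h.cont'
  have k5 := c1.h'.cont'
  have k6 := c2.h'.cont'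
  have q1 : Continuous (fun s => Dq Y1 Y1' s τ) := by unfold Dq; fun_prop
  have q2 : Continuous (fun s => Dq Y2 Y2' s τ) := by unfold Dq; fun_prop
  set E := En (δ + ε) (fun s => Y1 s - Y2 s) with hE
  have hE0 : 0 ≤ E := En_nonneg _ _
  set Z := Zc (θ + δ) with hZ
  have hZ0 : 0 ≤ Z := Zc_nonneg _
  set d : ℝ → ℂ := fun s => (Y1 (s + τ) - Y2 (s + τ)) - (Y1 s - Y2 s) with hd
  have hdc : Continuous d := by simp only [hd]; fun_prop
  set X := (2 * |τ| ^ ε) ^ 2 * E with hX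
  have hX0 : 0 ≤ X := by positivity
  have s1 := quot_est c1.h hτ hs1
  have s2 := quot_est c2.h hτ hs2
  have s3 := second_est c1.h c1.h' τ hs1
  have s4 := second_est c2.h c2.h' τ hs2
  have p1 := prod_tau (τ := τ) hθ hδ hsum h0 h1 (by fun_prop) hD.cont hD.per hsD s1
  have p2 := prod_tau (τ := τ) hθ hδ hsum h0 h1 (by fun_prop) hD.cont hD.per hsD s2
  have p3 := prod_tau (τ := τ) hθ hδ hsum h0 h1 (by fun_prop) hD.cont hD.per hsD s3
  have p4 := prod_tau (τ := τ) hθ hδ hsum h0 h1 (by fun_prop) hD.cont hD.per hsD s4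
  have p5 := diff_L2 hD.per hD.cont τ hδ h0 h1 hsD
  rw [← hE, ← hX] at p1 p2 p3 p4 p5
  rw [← hZ] at p1 p2 p3 p4
  set c := 20 * (2 * K) / l ^ 2 with hc
  have g : ∀ s, GG Y1 Y1' Y1'' Y2 Y2' Y2'' K l s τ ^ 2 ≤
      5 * (c ^ 2 * ((‖Dq Y1 Y1' s τ‖ * ‖d s‖) ^ 2 + (‖Dq Y2 Y2' s τ‖ * ‖d s‖) ^ 2
        + (‖Y1'' (s + τ)‖ * ‖d s‖) ^ 2 + (‖Y2'' (s + τ)‖ * ‖d s‖) ^ 2) + 16 * ‖d s‖ ^ 2)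
        * (|τ|⁻¹) ^ 2 := by
    intro s
    unfold GG
    rw [Lq_sub_norm, ← mul_assoc, mul_pow]
    gcongr
    exact five_sq _ _ _ _ _ _
  have m := intervalIntegral.integral_mono (μ := volume) (a := -π) (b := π) (by linarith)
    (Continuous.intervalIntegrable (by unfold GG Lq; fun_prop) _ _)
    (Continuous.intervalIntegrable (by fun_prop) _ _) g
  refine m.trans ?_
  rw [int_lin (by fun_prop) (by fun_prop) (by fun_prop) (by fun_prop) (by fun_prop)]
  have r1 : ∫ s in (-π)..π, (‖Dq Y1 Y1' s τ‖ * ‖d s‖) ^ 2 ≤ Z * (3 ^ 2 * K ^ 2 * X) :=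
    p1.trans (by gcongr)
  have r2 : ∫ s in (-π)..π, (‖Dq Y2 Y2' s τ‖ * ‖d s‖) ^ 2 ≤ Z * (3 ^ 2 * K ^ 2 * X) :=
    p2.trans (by gcongr)
  have r3 : ∫ s in (-π)..π, (‖Y1'' (s + τ)‖ * ‖d s‖) ^ 2 ≤ Z * (1 ^ 2 * K ^ 2 * X) :=
    p3.trans (by gcongr)
  have r4 : ∫ s in (-π)..π, (‖Y2'' (s + τ)‖ * ‖d s‖) ^ 2 ≤ Z * (1 ^ 2 * K ^ 2 * X) :=
    p4.trans (by gcongr)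
  have r5 : ∫ s in (-π)..π, ‖d s‖ ^ 2 ≤ X := p5
  have hl2 : l ≤ 2 * K := (deriv_low c1.h c1.w 0).trans (sup_of_hol c1.h hK c1.H 0)
  have one : 1 ≤ 16 * (K ^ 4 / l ^ 4) := by
    rw [← mul_div_assoc, le_div_iff₀ (by positivity), one_mul]
    calc l ^ 4 ≤ (2 * K) ^ 4 := by gcongr
      _ = _ := by ring
  have ec : c ^ 2 * K ^ 2 = 1600 * (K ^ 4 / l ^ 4) := by rw [hc]; field_simp; ring
  have eX : X * (|τ|⁻¹) ^ 2 = 4 * E * |τ| ^ (2 * ε - 2) := by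
    rw [hX, mul_pow, Real.rpow_sub (abs_pos.2 hτ)]
    rw [show |τ| ^ (2 * ε) = (|τ| ^ ε) ^ 2 by
      rw [← Real.rpow_natCast, ← Real.rpow_mul (abs_nonneg _)]; congr 1; push_cast; ring]
    rw [show |τ| ^ (2 : ℝ) = |τ| ^ 2 by exact_mod_cast Real.rpow_natCast |τ| 2]
    field_simp
    ring
  calc _ ≤ 5 * (c ^ 2 * (Z * (3 ^ 2 * K ^ 2 * X) + Z * (3 ^ 2 * K ^ 2 * X) +
        Z * (1 ^ 2 * K ^ 2 * X) + Z * (1 ^ 2 * K ^ 2 * X)) + 16 * X) * |τ|⁻¹ ^ 2 := by gcongr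
    _ = 5 * (20 * Z * (c ^ 2 * K ^ 2) + 16 * 1) * (X * |τ|⁻¹ ^ 2) := by ring
    _ ≤ 5 * (20 * Z * (c ^ 2 * K ^ 2) + 16 * (16 * (K ^ 4 / l ^ 4))) * (X * |τ|⁻¹ ^ 2) := by gcongr
    _ = _ := by
      rw [eX, ec, C0]
      ring

lemma FI_cont {Y Y' : ℝ → ℂ} (h : Crv Y Y') {l : ℝ} (hl : 0 < l)
    (hw : WS Y l) {τ : ℝ} (hτ : τ ≠ 0) (hτp : |τ| ≤ π) : Continuous (fun s => FI Y Y' s τ) := by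
  have k1 := h.cont
  have k2 := h.cont'
  have hcc := Complex.continuous_conj
  have hL : Continuous (fun s => Lq Y s τ) := by unfold Lq; fun_prop
  have hne : ∀ s, Lq Y s τ ≠ 0 := fun s => by
    have := Lq_low hw (s := s) hτ hτp
    rw [← norm_pos_iff]; linarith
  have hnec : ∀ s, conj (Lq Y s τ) ^ 2 ≠ 0 := fun s => pow_ne_zero _ (by simpa using hne s)
  unfold FI FF
  have a1 : Continuous (fun s => Y' (s + τ) ^ 2 / Lq Y s τ) :=
    Continuous.div (by fun_prop) hL hne
  have a2 : Continuous (fun s => conj (Y' (s + τ)) ^ 2 * Lq Y s τ / conj (Lq Y s τ) ^ 2) :=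
    Continuous.div (by fun_prop) (by fun_prop) hnec
  fun_prop

lemma g_cont {Y Y' : ℝ → ℂ} (h : Crv Y Y') {K l : ℝ} (hK : 0 ≤ K) (hH : Hol Y' K) (hl : 0 < l)
    (hw : WS Y l) : Continuous (fun s => ∫ τ in (-π)..π, FI Y Y' s τ) := by
  refine intervalIntegral.continuous_of_dominated_interval (bound := domF K l)
    (fun s => ((FI_meas h).comp measurable_prodMk_left).aestronglyMeasurable) (fun s => ?_)
    (domF_int K l) ?_
  · have := ae_ne_zero_imp (p := fun τ => ‖FI Y Y' s τ‖ ≤ domF K l τ)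
      fun τ hτ hτp => FI_bound h hK hH hl hw hτ hτp
    rwa [ae_restrict_iff' measurableSet_uIoc] at this
  · have := ae_ne_zero_imp (p := fun τ => Continuous (fun s => FI Y Y' s τ))
      fun τ hτ hτp => FI_cont h hl hw hτ hτp
    rwa [ae_restrict_iff' measurableSet_uIoc] at this

/-- the constant for smooth curves -/
def CT (θ δ ε : ℝ) : ℝ := 4 * (9216 + C0 θ δ * Wt ε ^ 2)

lemma C0_nonneg (θ δ : ℝ) : 0 ≤ C0 θ δ := by
  have := Zc_nonneg (θ + δ)
  unfold C0; positivity

lemma CT_pos (θ δ ε : ℝ) : 0 < CT θ δ ε := by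
  have := C0_nonneg θ δ
  unfold CT; positivity

lemma enn_sq (a b : ℝ≥0∞) : (a + b) ^ 2 ≤ 4 * (a ^ 2 + b ^ 2) := by
  rcases le_total a b with h | h
  · calc (a + b) ^ 2 ≤ (b + b) ^ 2 := by gcongr
      _ = 4 * b ^ 2 := by ring
      _ ≤ _ := by gcongr; exact le_add_self
  · calc (a + b) ^ 2 ≤ (a + a) ^ 2 := by gcongr
      _ = 4 * a ^ 2 := by ring
      _ ≤ _ := by gcongr; exact le_self_add

lemma bdry {Y1 Y2 : ℝ → ℂ} {δ ε τ : ℝ} (hc : Continuous (fun s => Y1 s - Y2 s))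
    (hp : Function.Periodic (fun s => Y1 s - Y2 s) (2 * π)) (hδ : 0 ≤ δ) (h0 : 0 ≤ ε) (h1 : ε ≤ 1)
    (hsD : Summable (ws (δ + ε) (fun s => Y1 s - Y2 s))) (hτ : |τ| = π) :
    ∫ s in (-π)..π, ‖Lq Y1 s τ - Lq Y2 s τ‖ ^ 2 ≤ 4 * En (δ + ε) (fun s => Y1 s - Y2 s) := by
  have hpi := pi_pos
  have h := diff_L2 hp hc τ hδ h0 h1 hsD
  simp only [Lq_sub_norm, mul_pow]
  rw [intervalIntegral.integral_mul_const]
  have e : (2 * |τ| ^ ε) ^ 2 * (|τ|⁻¹) ^ 2 ≤ 4 := by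
    rw [hτ]
    have : π ^ ε ≤ π ^ (1 : ℝ) := Real.rpow_le_rpow_of_exponent_le (by linarith [pi_gt_three]) h1
    rw [rpow_one] at this
    calc (2 * π ^ ε) ^ 2 * π⁻¹ ^ 2 ≤ (2 * π) ^ 2 * π⁻¹ ^ 2 := by gcongr
      _ = 4 := by field_simp; norm_num
  calc _ ≤ ((2 * |τ| ^ ε) ^ 2 * En (δ + ε) (fun s => Y1 s - Y2 s)) * (|τ|⁻¹) ^ 2 := by gcongr
    _ = ((2 * |τ| ^ ε) ^ 2 * (|τ|⁻¹) ^ 2) * En (δ + ε) (fun s => Y1 s - Y2 s) := by ring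
    _ ≤ _ := mul_le_mul_of_nonneg_right e (En_nonneg _ _)

lemma C2_est {Y1 Y1' Y1'' Y2 Y2' Y2'' : ℝ → ℂ} {K l θ δ ε : ℝ} (hK : 0 ≤ K) (hl : 0 < l)
    (c1 : C2 Y1 Y1' Y1'' K l) (c2 : C2 Y2 Y2' Y2'' K l)
    (hθ : 0 ≤ θ) (hδ : 0 ≤ δ) (hsum : 1 / 2 < θ + δ) (h0 : 0 < ε) (h1 : ε ≤ 1)
    (hs1 : Summable (ws (2 + θ) Y1)) (hs2 : Summable (ws (2 + θ) Y2))
    (hE1 : En (2 + θ) Y1 ≤ K ^ 2) (hE2 : En (2 + θ) Y2 ≤ K ^ 2)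
    (hsD : Summable (ws (δ + ε) (fun s => Y1 s - Y2 s))) :
    ∫ s in (-π)..π, ‖(∫ τ in (-π)..π, FI Y1 Y1' s τ) - ∫ τ in (-π)..π, FI Y2 Y2' s τ‖ ^ 2 ≤
      CT θ δ ε * (K ^ 4 / l ^ 4) * En (δ + ε) (fun s => Y1 s - Y2 s) := by
  have hpi := pi_pos
  have hD := c1.h.sub c2.h
  have k1 := c1.h.cont
  have k2 := c2.h.cont
  have gc1 := g_cont c1.h hK c1.H hl c1.w
  have gc2 := g_cont c2.h hK c2.H hl c2.w
  set E := En (δ + ε) (fun s => Y1 s - Y2 s) with hE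
  have hE0 : 0 ≤ E := En_nonneg _ _
  have hC0 := C0_nonneg θ δ
  set κ := K ^ 4 / l ^ 4 with hκ
  have hκ0 : 0 ≤ κ := by positivity
  set R : ℝ → ℝ := fun s => ‖(∫ τ in (-π)..π, FI Y1 Y1' s τ) - ∫ τ in (-π)..π, FI Y2 Y2' s τ‖
    with hR
  have hRc : Continuous R := by simp only [hR]; fun_prop
  set B : ℝ → ℝ := fun s => 6 * (2 * K) ^ 2 / l ^ 2 *
    (‖Lq Y1 s π - Lq Y2 s π‖ + ‖Lq Y1 s (-π) - Lq Y2 s (-π)‖) with hB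
  have hBc : Continuous B := by simp only [hB]; unfold Lq; fun_prop
  have hB0 : ∀ s, 0 ≤ B s := fun s => by simp only [hB]; positivity
  have hM : ∀ τ, τ ≠ 0 → |τ| ≤ π → ∫⁻ s in Set.Ioc (-π) π,
      ENNReal.ofReal (GG Y1 Y1' Y1'' Y2 Y2' Y2'' K l s τ) ^ 2 ≤
      ENNReal.ofReal ((C0 θ δ * κ * E) * |τ| ^ (2 * ε - 2)) := by
    intro τ hτ hτp
    have k3 := c1.h.cont'
    have k4 := c2.h.cont'
    have k5 := c1.h'.cont'
    have k6 := c2.h'.cont'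
    rw [lint_of_int (f := fun s => GG Y1 Y1' Y1'' Y2 Y2' Y2'' K l s τ)
      (by unfold GG Dq Lq; fun_prop) (fun s => by unfold GG; positivity)]
    exact ENNReal.ofReal_le_ofReal
      (tau_est hK hl c1 c2 hθ hδ hsum h0.le h1 hs1 hs2 hE1 hE2 hsD hτ)
  have hmk := mink (GG_meas c1 c2) h0 (by positivity) hM
  have hbB : ∫ s in (-π)..π, B s ^ 2 ≤ 9216 * κ * E := by
    have hb1 := bdry (τ := π) hD.cont hD.per hδ h0.le h1 hsD (abs_of_pos hpi)
    have hb2 := bdry (τ := -π) hD.cont hD.per hδ h0.le h1 hsD (by rw [abs_neg, abs_of_pos hpi])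
    rw [← hE] at hb1 hb2
    have ka : Continuous (fun s => ‖Lq Y1 s π - Lq Y2 s π‖) := by unfold Lq; fun_prop
    have kb : Continuous (fun s => ‖Lq Y1 s (-π) - Lq Y2 s (-π)‖) := by unfold Lq; fun_prop
    have hpt : ∀ s, B s ^ 2 ≤ 1152 * κ *
        (‖Lq Y1 s π - Lq Y2 s π‖ ^ 2 + ‖Lq Y1 s (-π) - Lq Y2 s (-π)‖ ^ 2) := by
      intro s
      simp only [hB]
      have e : (6 * (2 * K) ^ 2 / l ^ 2) ^ 2 = 576 * κ := by rw [hκ]; field_simp; ring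
      rw [mul_pow, e, show 1152 * κ = 576 * κ * 2 by ring, mul_assoc (576 * κ)]
      exact mul_le_mul_of_nonneg_left add_sq_le (by positivity)
    refine (intervalIntegral.integral_mono (by linarith)
      (Continuous.intervalIntegrable (by fun_prop) _ _)
      (Continuous.intervalIntegrable (by fun_prop) _ _) hpt).trans ?_
    rw [intervalIntegral.integral_const_mul, intervalIntegral.integral_add
      (Continuous.intervalIntegrable (by fun_prop) _ _)
      (Continuous.intervalIntegrable (by fun_prop) _ _)]
    calc _ ≤ 1152 * κ * (4 * E + 4 * E) := by gcongr
      _ = _ := by ring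
  have hpt : ∀ s, ENNReal.ofReal (R s) ≤ ENNReal.ofReal (B s) + ∫⁻ τ in Set.Ioc (-π) π,
      ENNReal.ofReal (GG Y1 Y1' Y1'' Y2 Y2' Y2'' K l s τ) := by
    intro s
    have hp := ptw hK hl c1 c2 s
    have hG := GG_int hK hl c1 c2 s
    rw [intervalIntegrable_iff_integrableOn_Ioc_of_le (by linarith)] at hG
    have hnn : ∀ τ, 0 ≤ GG Y1 Y1' Y1'' Y2 Y2' Y2'' K l s τ := fun τ => by unfold GG; positivity
    rw [← ofReal_integral_eq_lintegral_ofReal hG (Eventually.of_forall hnn),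
      ← ENNReal.ofReal_add (hB0 s) (integral_nonneg hnn)]
    rw [intervalIntegral.integral_of_le (by linarith) (f := GG Y1 Y1' Y1'' Y2 Y2' Y2'' K l s)] at hp
    exact ENNReal.ofReal_le_ofReal hp
  have key : ENNReal.ofReal (∫ s in (-π)..π, R s ^ 2) ≤
      ENNReal.ofReal (CT θ δ ε * κ * E) := by
    rw [← lint_of_int hRc (fun s => norm_nonneg _)]
    calc _ ≤ ∫⁻ s in Set.Ioc (-π) π, 4 * (ENNReal.ofReal (B s) ^ 2 + (∫⁻ τ in Set.Ioc (-π) π,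
          ENNReal.ofReal (GG Y1 Y1' Y1'' Y2 Y2' Y2'' K l s τ)) ^ 2) := by
          refine lintegral_mono fun s => ?_
          refine (pow_le_pow_left' (hpt s) 2).trans (enn_sq _ _)
      _ = 4 * (ENNReal.ofReal (∫ s in (-π)..π, B s ^ 2) + ∫⁻ s in Set.Ioc (-π) π,
          (∫⁻ τ in Set.Ioc (-π) π, ENNReal.ofReal (GG Y1 Y1' Y1'' Y2 Y2' Y2'' K l s τ)) ^ 2) := by
          rw [lintegral_const_mul' _ _ (by simp), lintegral_add_left (by fun_prop),
            lint_of_int hBc hB0]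
      _ ≤ 4 * (ENNReal.ofReal (9216 * κ * E) + ENNReal.ofReal (C0 θ δ * κ * E * Wt ε ^ 2)) := by
          gcongr
      _ = _ := by
          rw [← ENNReal.ofReal_add (by positivity) (by positivity),
            show (4 : ℝ≥0∞) = ENNReal.ofReal 4 by simp, ← ENNReal.ofReal_mul (by norm_num)]
          congr 1
          unfold CT
          ring
  have hCT := CT_pos θ δ ε
  exact (ENNReal.ofReal_le_ofReal_iff (by positivity)).1 key

/-- Steklov average -/
def St (h : ℝ) (Y : ℝ → ℂ) (s : ℝ) : ℂ := (∫ x in s..(s + h), Y x) / h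

/-- difference quotient with fixed increment -/
def Sd (h : ℝ) (Y : ℝ → ℂ) (s : ℝ) : ℂ := (Y (s + h) - Y s) / h

lemma St_eq (h : ℝ) {Y : ℝ → ℂ} (hY : Continuous Y) (s : ℝ) :
    St h Y s = ((∫ x in (0 : ℝ)..(s + h), Y x) - ∫ x in (0 : ℝ)..s, Y x) / h := by
  unfold St
  rw [intervalIntegral.integral_interval_sub_left] <;> exact hY.intervalIntegrable _ _

lemma prim_der {Y : ℝ → ℂ} (hY : Continuous Y) (s : ℝ) :
    HasDerivAt (fun s => ∫ x in (0 : ℝ)..s, Y x) (Y s) s :=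
  intervalIntegral.integral_hasDerivAt_right (hY.intervalIntegrable _ _)
    (hY.stronglyMeasurableAtFilter _ _) hY.continuousAt

lemma Sd_crv {Y Y' : ℝ → ℂ} (c : Crv Y Y') (h : ℝ) : Crv (Sd h Y) (Sd h Y') where
  per := fun s => by
    unfold Sd
    have := c.per (s + h)
    rw [show s + h + 2 * π = s + 2 * π + h by ring] at this
    rw [this, c.per s]
  der := fun s => by
    unfold Sd
    exact (((c.der (s + h)).comp_add_const s h).sub (c.der s)).div_const _
  cont' := by
    have := c.cont'
    unfold Sd; fun_prop

lemma St_crv {Y Y' : ℝ → ℂ} (c : Crv Y Y') (h : ℝ) : Crv (St h Y) (Sd h Y) where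
  per := fun s => by
    unfold St
    congr 1
    have := intervalIntegral.integral_comp_add_right (a := s) (b := s + h) Y (2 * π)
    rw [show s + 2 * π + h = s + h + 2 * π by ring, ← this]
    simp only [c.per _]
  der := fun s => by
    have hY := c.cont
    have e : St h Y = fun s => ((∫ x in (0 : ℝ)..(s + h), Y x) - ∫ x in (0 : ℝ)..s, Y x) / h :=
      funext (St_eq h hY)
    rw [e]
    exact (((prim_der hY (s + h)).comp_add_const s h).sub (prim_der hY s)).div_const _
  cont' := by
    have := c.cont
    unfold Sd; fun_prop

lemma St_sub {Y W : ℝ → ℂ} (hY : Continuous Y) (hW : Continuous W) (h : ℝ) :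
    (fun s => St h Y s - St h W s) = St h (fun s => Y s - W s) := by
  funext s
  unfold St
  rw [intervalIntegral.integral_sub (hY.intervalIntegrable _ _) (hW.intervalIntegrable _ _)]
  ring

lemma Sd_lim {Y Y' : ℝ → ℂ} (c : Crv Y Y') (s : ℝ) :
    Tendsto (fun h => Sd h Y s) (𝓝[>] 0) (𝓝 (Y' s)) :=
  (Lq_lim c s).mono_left (nhdsWithin_mono _ fun _ hx => ne_of_gt hx)

lemma St_lim {Y : ℝ → ℂ} (hY : Continuous Y) (s : ℝ) :
    Tendsto (fun h => St h Y s) (𝓝[>] 0) (𝓝 (Y s)) := by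
  have := hasDerivAt_iff_tendsto_slope_zero.1 (prim_der hY s)
  have h2 := this.mono_left (nhdsWithin_mono _ fun (x : ℝ) (hx : x ∈ Set.Ioi 0) => ne_of_gt hx)
  refine h2.congr fun t => ?_
  rw [St_eq t hY, Complex.real_smul, div_eq_mul_inv, mul_comm, Complex.ofReal_inv]

lemma St_fc {Y Y' : ℝ → ℂ} (c : Crv Y Y') {h : ℝ} (hh : 0 < h) {k : ℤ} (hk : k ≠ 0) :
    ‖fc (St h Y) k‖ ≤ ‖fc Y k‖ := by
  have e1 := fc_deriv (St_crv c h) k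
  have e2 : fc (Sd h Y) k = (h : ℂ)⁻¹ * ((Complex.exp (Complex.I * (k * h : ℝ)) - 1) * fc Y k) := by
    rw [← fc_diff c.per c.cont, ← fc_mul_left]
    congr 1
    funext s
    unfold Sd
    rw [div_eq_mul_inv, mul_comm]
  have e3 : ‖Complex.exp (Complex.I * (k * h : ℝ)) - 1‖ ≤ |(k : ℝ)| * h := by
    have := Real.norm_exp_I_mul_ofReal_sub_one_le (x := k * h)
    rw [Real.norm_eq_abs, abs_mul, abs_of_pos hh] at this
    exact this
  have hk0 : 0 < |(k : ℝ)| := by have := abs_int_ge hk; linarith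
  have e4 : |(k : ℝ)| * ‖fc (St h Y) k‖ ≤ |(k : ℝ)| * ‖fc Y k‖ := by
    have : ‖fc (Sd h Y) k‖ = |(k : ℝ)| * ‖fc (St h Y) k‖ := by
      rw [e1, norm_mul, norm_mul, Complex.norm_I, one_mul]
      congr 1
      rw [← Complex.ofReal_intCast, Complex.norm_real, Real.norm_eq_abs]
    rw [← this, e2, norm_mul, norm_mul, norm_inv, Complex.norm_real, Real.norm_eq_abs,
      abs_of_pos hh]
    calc _ ≤ h⁻¹ * (|(k : ℝ)| * h * ‖fc Y k‖) := by gcongr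
      _ = _ := by field_simp
  exact le_of_mul_le_mul_left e4 hk0

lemma St_En {Y Y' : ℝ → ℂ} (c : Crv Y Y') {h : ℝ} (hh : 0 < h) {σ : ℝ} (hs : Summable (ws σ Y)) :
    Summable (ws σ (St h Y)) ∧ En σ (St h Y) ≤ En σ Y := by
  have := En_mono_of (σ := σ) (ρ := 0) (c := 1) (f := St h Y) (g := Y) (by norm_num)
    (fun k hk => by simpa using St_fc c hh hk) (by simpa using hs)
  simpa using this

lemma St_hol {Y Y' : ℝ → ℂ} (c : Crv Y Y') {h θ K : ℝ} (hh : 0 < h) (hθ : 0 ≤ θ)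
    (hs : Summable (ws (2 + θ) Y)) (hK : 0 ≤ K) (hE : En (2 + θ) Y ≤ K ^ 2) : Hol (Sd h Y) K := by
  obtain ⟨s1, s2⟩ := St_En c hh hs
  obtain ⟨a, b, d⟩ := second_est (St_crv c h) (Sd_crv c h) 0 s1
  simp only [add_zero] at a b d
  refine hol_of_C2 (Sd_crv c h) hK ?_
  have := L2_le_En (Sd_crv c h).cont' a hθ b
  linarith

lemma hol_of_En {Y Y' : ℝ → ℂ} (c : Crv Y Y') {θ K : ℝ} (hθ : 0 ≤ θ)
    (hs : Summable (ws (2 + θ) Y)) (hK : 0 ≤ K) (hE : En (2 + θ) Y ≤ K ^ 2) : Hol Y' K := by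
  intro a b hab
  refine le_of_tendsto ((Sd_lim c a).sub (Sd_lim c b)).norm ?_
  filter_upwards [self_mem_nhdsWithin] with h hh
  exact St_hol c hh hθ hs hK hE a b hab

lemma Sd_close {Y Y' : ℝ → ℂ} (c : Crv Y Y') {K : ℝ} (hK : 0 ≤ K) (hH : Hol Y' K) {h : ℝ}
    (hh : 0 < h) (hhp : h ≤ π) (s : ℝ) : ‖Sd h Y s - Y' s‖ ≤ K * √h := by
  have := lin_approx c hK hH (a := s) (b := s + h) (c := s)
    (by rw [add_sub_cancel_left, abs_of_pos hh]; exact hhp) Set.left_mem_uIcc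
  rw [add_sub_cancel_left, abs_of_pos hh] at this
  have hc : (h : ℂ) ≠ 0 := by exact_mod_cast hh.ne'
  have e : Sd h Y s - Y' s = (Y (s + h) - Y s - h * Y' s) / h := by
    unfold Sd; field_simp
  rw [e, norm_div, Complex.norm_real, Real.norm_eq_abs, abs_of_pos hh, div_le_iff₀ hh]
  exact this

lemma St_ws {Y Y' : ℝ → ℂ} (c : Crv Y Y') {K l : ℝ} (hK : 0 ≤ K) (hH : Hol Y' K) (hw : WS Y l)
    {h : ℝ} (hh : 0 < h) (hhp : h ≤ π) (hKl : K * √h ≤ l / 2) : WS (St h Y) (l / 2) := by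
  intro s₁ s₂ hs
  have h1 := hw s₁ s₂ hs
  have h2 := Convex.norm_image_sub_le_of_norm_hasDerivWithin_le (s := Set.univ)
    (f := fun s => St h Y s - Y s) (f' := fun s => Sd h Y s - Y' s) (C := l / 2) (x := s₂) (y := s₁)
    (fun x _ => (((St_crv c h).der x).sub (c.der x)).hasDerivWithinAt)
    (fun x _ => (Sd_close c hK hH hh hhp x).trans hKl) convex_univ trivial trivial
  rw [Real.norm_eq_abs] at h2
  have e : Y s₁ - Y s₂ = (St h Y s₁ - St h Y s₂) - (St h Y s₁ - Y s₁ - (St h Y s₂ - Y s₂)) := by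
    ring
  rw [e] at h1
  have h3 := norm_sub_le (St h Y s₁ - St h Y s₂) (St h Y s₁ - Y s₁ - (St h Y s₂ - Y s₂))
  linarith

lemma FI_lim {Y Y' : ℝ → ℂ} (c : Crv Y Y') {l : ℝ} (hl : 0 < l) (hw : WS Y l) {s τ : ℝ}
    (hτ : τ ≠ 0) (hτp : |τ| ≤ π) :
    Tendsto (fun h => FI (St h Y) (Sd h Y) s τ) (𝓝[>] 0) (𝓝 (FI Y Y' s τ)) := by
  have hL : Tendsto (fun h => Lq (St h Y) s τ) (𝓝[>] 0) (𝓝 (Lq Y s τ)) :=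
    ((St_lim c.cont (s + τ)).sub (St_lim c.cont s)).div_const _
  have hM := Sd_lim c (s + τ)
  have hne : Lq Y s τ ≠ 0 := by
    have := Lq_low hw (s := s) hτ hτp
    rw [← norm_pos_iff]; linarith
  have hnec : conj (Lq Y s τ) ^ 2 ≠ 0 := pow_ne_zero _ (by simpa using hne)
  have hLc := (Complex.continuous_conj.tendsto _).comp hL
  have hMc := (Complex.continuous_conj.tendsto _).comp hM
  exact (((((hM.pow 2).div hL hne).add (((hMc.pow 2).mul hL).div (hLc.pow 2) hnec)).sub
    (hL.const_mul 2)).div_const _).add (hL.const_mul _)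

/-- Estimate for the complexified problem. -/
lemma main_est {Y1 Y1' Y2 Y2' : ℝ → ℂ} {K l θ δ ε : ℝ} (hK : 0 ≤ K) (hl : 0 < l)
    (c1 : Crv Y1 Y1') (c2 : Crv Y2 Y2') (w1 : WS Y1 l) (w2 : WS Y2 l)
    (hθ : 0 ≤ θ) (hδ : 0 ≤ δ) (hsum : 1 / 2 < θ + δ) (h0 : 0 < ε) (h1 : ε ≤ 1)
    (hs1 : Summable (ws (2 + θ) Y1)) (hs2 : Summable (ws (2 + θ) Y2))
    (hE1 : En (2 + θ) Y1 ≤ K ^ 2) (hE2 : En (2 + θ) Y2 ≤ K ^ 2)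
    (hsD : Summable (ws (δ + ε) (fun s => Y1 s - Y2 s))) :
    Continuous (fun s => ‖(∫ τ in (-π)..π, FI Y1 Y1' s τ) - ∫ τ in (-π)..π, FI Y2 Y2' s τ‖ ^ 2) ∧
    ∫ s in (-π)..π, ‖(∫ τ in (-π)..π, FI Y1 Y1' s τ) - ∫ τ in (-π)..π, FI Y2 Y2' s τ‖ ^ 2 ≤
      CT θ δ ε * (K ^ 4 / (l / 2) ^ 4) * En (δ + ε) (fun s => Y1 s - Y2 s) := by
  have hpi := pi_pos
  have hl2 : 0 < l / 2 := by linarith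
  have H1 := hol_of_En c1 hθ hs1 hK hE1
  have H2 := hol_of_En c2 hθ hs2 hK hE2
  have gc1 := g_cont c1 hK H1 hl w1
  have gc2 := g_cont c2 hK H2 hl w2
  refine ⟨by fun_prop, ?_⟩
  have ev : ∀ᶠ h : ℝ in 𝓝[>] 0, 0 < h ∧ h ≤ π ∧ K * √h ≤ l / 2 := by
    have a1 : ∀ᶠ h : ℝ in 𝓝[>] 0, 0 < h := self_mem_nhdsWithin
    have a2 : ∀ᶠ h : ℝ in 𝓝[>] 0, h < π := nhdsWithin_le_nhds (gt_mem_nhds hpi)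
    have a3 : ∀ᶠ h : ℝ in 𝓝[>] 0, K * √h < l / 2 := by
      have : Tendsto (fun h : ℝ => K * √h) (𝓝 0) (𝓝 (K * √0)) :=
        (Continuous.tendsto (by fun_prop) 0)
      rw [Real.sqrt_zero, mul_zero] at this
      exact nhdsWithin_le_nhds (this.eventually (gt_mem_nhds hl2))
    filter_upwards [a1, a2, a3] with h x y z
    exact ⟨x, y.le, z.le⟩
  have inner : ∀ {Y Y' : ℝ → ℂ}, Crv Y Y' → WS Y l → Summable (ws (2 + θ) Y) →
      En (2 + θ) Y ≤ K ^ 2 → ∀ s, Tendsto (fun h => ∫ τ in (-π)..π, FI (St h Y) (Sd h Y) s τ)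
        (𝓝[>] 0) (𝓝 (∫ τ in (-π)..π, FI Y Y' s τ)) := by
    intro Y Y' c w hs hE s
    have H := hol_of_En c hθ hs hK hE
    refine intervalIntegral.tendsto_integral_filter_of_dominated_convergence (domF K (l / 2))
      ?_ ?_ (domF_int K (l / 2)) ?_
    · exact Eventually.of_forall fun h =>
        ((FI_meas (St_crv c h)).comp measurable_prodMk_left).aestronglyMeasurable
    · filter_upwards [ev] with h ⟨x, y, z⟩
      have := ae_ne_zero_imp (p := fun τ => ‖FI (St h Y) (Sd h Y) s τ‖ ≤ domF K (l / 2) τ)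
        fun τ hτ hτp => FI_bound (St_crv c h) hK (St_hol c x hθ hs hK hE) hl2
          (St_ws c hK H w x y z) hτ hτp
      rwa [ae_restrict_iff' measurableSet_uIoc] at this
    · have := ae_ne_zero_imp fun τ hτ hτp => FI_lim c hl w (s := s) hτ hτp
      rwa [ae_restrict_iff' measurableSet_uIoc] at this
  have innerb : ∀ {Y Y' : ℝ → ℂ}, Crv Y Y' → WS Y l → Summable (ws (2 + θ) Y) →
      En (2 + θ) Y ≤ K ^ 2 → ∀ h, 0 < h → h ≤ π → K * √h ≤ l / 2 → ∀ s,
        ‖∫ τ in (-π)..π, FI (St h Y) (Sd h Y) s τ‖ ≤ ∫ τ in (-π)..π, domF K (l / 2) τ := by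
    intro Y Y' c w hs hE h x y z s
    have H := hol_of_En c hθ hs hK hE
    refine intervalIntegral.norm_integral_le_of_norm_le (by linarith) ?_ (domF_int K (l / 2))
    have := ae_ne_zero_imp (p := fun τ => ‖FI (St h Y) (Sd h Y) s τ‖ ≤ domF K (l / 2) τ)
      fun τ hτ hτp => FI_bound (St_crv c h) hK (St_hol c x hθ hs hK hE) hl2
        (St_ws c hK H w x y z) hτ hτp
    rwa [ae_restrict_iff' measurableSet_uIoc, Set.uIoc_of_le (by linarith)] at this
  set Q := ∫ τ in (-π)..π, domF K (l / 2) τ with hQ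
  have lim : Tendsto (fun h => ∫ s in (-π)..π, ‖(∫ τ in (-π)..π, FI (St h Y1) (Sd h Y1) s τ) -
      ∫ τ in (-π)..π, FI (St h Y2) (Sd h Y2) s τ‖ ^ 2) (𝓝[>] 0)
      (𝓝 (∫ s in (-π)..π, ‖(∫ τ in (-π)..π, FI Y1 Y1' s τ) -
        ∫ τ in (-π)..π, FI Y2 Y2' s τ‖ ^ 2)) := by
    refine intervalIntegral.tendsto_integral_filter_of_dominated_convergence
      (fun _ => (Q + Q) ^ 2) ?_ ?_ (by simp) ?_
    · filter_upwards [ev] with h ⟨x, y, z⟩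
      have k1 := g_cont (St_crv c1 h) hK (St_hol c1 x hθ hs1 hK hE1) hl2 (St_ws c1 hK H1 w1 x y z)
      have k2 := g_cont (St_crv c2 h) hK (St_hol c2 x hθ hs2 hK hE2) hl2 (St_ws c2 hK H2 w2 x y z)
      exact Continuous.aestronglyMeasurable (by fun_prop)
    · filter_upwards [ev] with h ⟨x, y, z⟩
      refine Eventually.of_forall fun s _ => ?_
      rw [norm_pow, norm_norm]
      have b1 := innerb c1 w1 hs1 hE1 h x y z s
      have b2 := innerb c2 w2 hs2 hE2 h x y z s
      gcongr
      exact (norm_sub_le _ _).trans (add_le_add b1 b2)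
    · exact Eventually.of_forall fun s _ =>
        (((inner c1 w1 hs1 hE1 s).sub (inner c2 w2 hs2 hE2 s)).norm.pow 2)
  refine le_of_tendsto lim ?_
  filter_upwards [ev] with h ⟨x, y, z⟩
  obtain ⟨t1, t2⟩ := St_En c1 x hs1
  obtain ⟨t3, t4⟩ := St_En c2 x hs2
  have hD := St_En (c1.sub c2) x hsD
  rw [← St_sub c1.cont c2.cont] at hD
  have cc1 : C2 (St h Y1) (Sd h Y1) (Sd h Y1') K (l / 2) :=
    ⟨St_crv c1 h, Sd_crv c1 h, St_hol c1 x hθ hs1 hK hE1, St_ws c1 hK H1 w1 x y z⟩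
  have cc2 : C2 (St h Y2) (Sd h Y2) (Sd h Y2') K (l / 2) :=
    ⟨St_crv c2 h, Sd_crv c2 h, St_hol c2 x hθ hs2 hK hE2, St_ws c2 hK H2 w2 x y z⟩
  have := C2_est hK hl2 cc1 cc2 hθ hδ hsum h0 h1 t1 t3 (t2.trans hE1) (t4.trans hE2) hD.1
  refine this.trans ?_
  have hCT := CT_pos θ δ ε
  exact mul_le_mul_of_nonneg_left hD.2 (by positivity)

/-- The identification of the Euclidean plane with the complex plane. -/
def Phi : E2 ≃ₗᵢ[ℝ] ℂ := Complex.orthonormalBasisOneI.repr.symm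

lemma Phi_apply (v : E2) : Phi v = (v 0 : ℂ) + (v 1 : ℂ) * Complex.I := by
  simp [Phi]

lemma Phi_int (f : ℝ → E2) : Phi (∫ τ in (-π)..π, f τ) = ∫ τ in (-π)..π, Phi (f τ) := by
  have h : ∀ μ : Measure ℝ, ∫ τ, Phi (f τ) ∂μ = Phi (∫ τ, f τ ∂μ) := fun μ =>
    Phi.toContinuousLinearEquiv.integral_comp_comm f
  rw [intervalIntegral, intervalIntegral, map_sub, h, h]

lemma FF_alg {L M : ℂ} (hL : L ≠ 0) {τ : ℝ} (hτ : τ ≠ 0) :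
    (((-‖M‖ ^ 2 / ‖L‖ ^ 2 + 2 * (⟪L, M⟫) ^ 2 / ‖L‖ ^ 4 - 1) / τ + kap τ : ℝ) : ℂ) * L
      = FF L M τ := by
  have hLc : conj L ≠ 0 := by simpa using hL
  have hτ' : (τ : ℂ) ≠ 0 := by exact_mod_cast hτ
  have e1 : ((‖M‖ : ℂ)) ^ 2 = M * conj M := (Complex.mul_conj' M).symm
  have e2 : ((‖L‖ : ℂ)) ^ 2 = L * conj L := (Complex.mul_conj' L).symm
  have e3 : ((‖L‖ : ℂ)) ^ 4 = (L * conj L) ^ 2 := by rw [← e2]; ring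
  have e4 : ((⟪L, M⟫ : ℝ) : ℂ) = (conj L * M + L * conj M) / 2 := by
    rw [Complex.inner]
    rw [Complex.re_eq_add_conj]
    simp [mul_comm]
  push_cast
  rw [e1, e2, e3, e4]
  unfold FF
  field_simp
  ring

lemma gY_eq {Y Y' : ℝ → E2} {l : ℝ} (hl : 0 < l) (w : WS (fun s => Phi (Y s)) l) (s : ℝ) :
    Phi (gY Y Y' s) = ((4 * π)⁻¹ : ℝ) •
      ∫ τ in (-π)..π, FI (fun s => Phi (Y s)) (fun s => Phi (Y' s)) s τ := by
  unfold gY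
  rw [map_smul, Phi_int]
  congr 1
  refine intervalIntegral.integral_congr_ae ?_
  have := ae_ne_zero_imp (p := fun τ => Phi ((((-‖Y' (s + τ)‖ ^ 2 / ‖τ⁻¹ • (Y (s + τ) - Y s)‖ ^ 2
          + 2 * (⟪τ⁻¹ • (Y (s + τ) - Y s), Y' (s + τ)⟫) ^ 2 /
              ‖τ⁻¹ • (Y (s + τ) - Y s)‖ ^ 4
          - 1) / τ
        + (1 / τ - τ / (4 * Real.sin (τ / 2) ^ 2))) • (τ⁻¹ • (Y (s + τ) - Y s)))) =
        FI (fun s => Phi (Y s)) (fun s => Phi (Y' s)) s τ) ?_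
  · rwa [ae_restrict_iff' measurableSet_uIoc] at this
  · intro τ hτ hτp
    have hlow := Lq_low w (s := s) hτ hτp
    have hL0 : Lq (fun s => Phi (Y s)) s τ ≠ 0 := by
      intro h; rw [h, norm_zero] at hlow; linarith
    have hv : Phi (τ⁻¹ • (Y (s + τ) - Y s)) = Lq (fun s => Phi (Y s)) s τ := by
      rw [map_smul, map_sub]
      unfold Lq
      rw [Complex.real_smul, Complex.ofReal_inv, div_eq_inv_mul]
    rw [map_smul]
    rw [← Phi.norm_map (Y' (s + τ)), ← Phi.norm_map (τ⁻¹ • (Y (s + τ) - Y s)),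
      ← Phi.inner_map_map, hv, Complex.real_smul]
    exact FF_alg hL0 hτ

lemma fc_sq_le {Y : ℝ → E2} (hY : Continuous Y) (k : ℤ) :
    ‖fc (fun s => Phi (Y s)) k‖ ^ 2 ≤ 2 * coefSq Y k := by
  have h0 : Continuous fun s => ((Y s 0 : ℝ) : ℂ) := by fun_prop
  have h1 : Continuous fun s => ((Y s 1 : ℝ) : ℂ) := by fun_prop
  have e : fc (fun s => Phi (Y s)) k =
      fc (fun s => ((Y s 0 : ℝ) : ℂ)) k + Complex.I * fc (fun s => ((Y s 1 : ℝ) : ℂ)) k := by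
    unfold fc
    rw [← intervalIntegral.integral_const_mul, ← intervalIntegral.integral_add
      (Continuous.intervalIntegrable (by fun_prop) _ _)
      (Continuous.intervalIntegrable (by fun_prop) _ _)]
    congr 1
    ext s
    simp only [Phi_apply]; ring
  have hn : ‖fc (fun s => Phi (Y s)) k‖ ≤
      ‖fc (fun s => ((Y s 0 : ℝ) : ℂ)) k‖ + ‖fc (fun s => ((Y s 1 : ℝ) : ℂ)) k‖ := by
    rw [e]
    refine (norm_add_le _ _).trans ?_
    rw [norm_mul, Complex.norm_I, one_mul]
  have hc : coefSq Y k = ‖fc (fun s => ((Y s 0 : ℝ) : ℂ)) k‖ ^ 2 +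
      ‖fc (fun s => ((Y s 1 : ℝ) : ℂ)) k‖ ^ 2 := by
    unfold coefSq fc
    rw [Fin.sum_univ_two, Complex.normSq_eq_norm_sq, Complex.normSq_eq_norm_sq]
  rw [hc]
  have := norm_nonneg (fc (fun s => Phi (Y s)) k)
  nlinarith [sq_nonneg (‖fc (fun s => ((Y s 0 : ℝ) : ℂ)) k‖ - ‖fc (fun s => ((Y s 1 : ℝ) : ℂ)) k‖)]

lemma coefSq_nonneg (Y : ℝ → E2) (k : ℤ) : 0 ≤ coefSq Y k :=
  Finset.sum_nonneg fun _ _ => Complex.normSq_nonneg _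

lemma sobSummand_nonneg (σ : ℝ) (Y : ℝ → E2) (k : ℤ) : 0 ≤ sobSummand σ Y k := by
  unfold sobSummand
  have := coefSq_nonneg Y k
  split_ifs
  · rfl
  · positivity

lemma ws_le_sob (σ : ℝ) {Y : ℝ → E2} (hY : Continuous Y) (k : ℤ) :
    ws σ (fun s => Phi (Y s)) k ≤ 2 * sobSummand σ Y k := by
  unfold ws sobSummand
  split_ifs
  · simp
  · have := fc_sq_le hY k
    rw [mul_left_comm]
    gcongr

lemma En_le_sob {σ : ℝ} {Y : ℝ → E2} (hY : Continuous Y) (hs : Summable (sobSummand σ Y)) :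
    Summable (ws σ (fun s => Phi (Y s))) ∧ En σ (fun s => Phi (Y s)) ≤ 2 * sobNorm σ Y ^ 2 := by
  have h1 : Summable (ws σ (fun s => Phi (Y s))) :=
    Summable.of_nonneg_of_le (ws_nonneg _ _) (ws_le_sob σ hY) (hs.mul_left 2)
  refine ⟨h1, ?_⟩
  unfold sobNorm En
  rw [Real.sq_sqrt (tsum_nonneg (sobSummand_nonneg σ Y)), ← tsum_mul_left]
  exact h1.tsum_le_tsum (ws_le_sob σ hY) (hs.mul_left 2)

lemma coefSq_sub {Y W : ℝ → E2} (hY : Continuous Y) (hW : Continuous W) (k : ℤ) :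
    coefSq (fun s => Y s - W s) k ≤ 2 * (coefSq Y k + coefSq W k) := by
  unfold coefSq
  rw [← Finset.sum_add_distrib, Finset.mul_sum]
  refine Finset.sum_le_sum fun j _ => ?_
  have e := fc_sub (f := fun s => ((Y s j : ℝ) : ℂ)) (g := fun s => ((W s j : ℝ) : ℂ))
    (by fun_prop) (by fun_prop) k
  unfold fc at e
  simp only [PiLp.sub_apply, Complex.ofReal_sub]
  simp only at e
  rw [e, Complex.normSq_eq_norm_sq, Complex.normSq_eq_norm_sq, Complex.normSq_eq_norm_sq]
  set a := ∫ s in (-π)..π, ((Y s j : ℝ) : ℂ) * Complex.exp (-Complex.I * (k : ℂ) * (s : ℂ))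
  set b := ∫ s in (-π)..π, ((W s j : ℝ) : ℂ) * Complex.exp (-Complex.I * (k : ℂ) * (s : ℂ))
  have := norm_sub_le a b
  have := norm_nonneg (a - b)
  nlinarith [sq_nonneg (‖a‖ - ‖b‖)]

lemma sob_sub_summable {σ ρ : ℝ} (h : σ ≤ ρ) {Y W : ℝ → E2} (hY : Continuous Y) (hW : Continuous W)
    (h1 : Summable (sobSummand ρ Y)) (h2 : Summable (sobSummand ρ W)) :
    Summable (sobSummand σ (fun s => Y s - W s)) := by
  refine Summable.of_nonneg_of_le (sobSummand_nonneg _ _) (fun k => ?_) ((h1.add h2).mul_left 2)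
  unfold sobSummand
  split_ifs with hk
  · simp
  · have hk1 : (1 : ℝ) ≤ |(k : ℝ)| := by
      have := Int.one_le_abs hk
      exact_mod_cast this
    have h3 : |(k : ℝ)| ^ (2 * σ) ≤ |(k : ℝ)| ^ (2 * ρ) :=
      Real.rpow_le_rpow_of_exponent_le hk1 (by linarith)
    have h4 := coefSq_sub hY hW k
    have h5 := coefSq_nonneg (fun s => Y s - W s) k
    calc _ ≤ |(k : ℝ)| ^ (2 * ρ) * (2 * (coefSq Y k + coefSq W k)) := by
          gcongr
      _ = _ := by ring

/-- The improved `L²` estimate for `g_{Y₁} − g_{Y₂}`. -/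
theorem statement18 (θ β : ℝ) (hθ1 : 1 / 4 ≤ θ) (hθ2 : θ < 1)
    (hβ1 : 0 < β) (hβ2 : β < min θ (1 / 2)) :
    ∃ C : ℝ, 0 < C ∧
      ∀ (Y₁ Y₁' Y₁'' Y₂ Y₂' Y₂'' : ℝ → E2) (lam : ℝ),
        0 < lam →
        Function.Periodic Y₁ (2 * π) →
        (∀ s, HasDerivAt Y₁ (Y₁' s) s) →
        Continuous Y₁' →
        LocallyIntegrable Y₁'' volume →
        (∀ a b : ℝ, a ≤ b → Y₁' b - Y₁' a = ∫ u in a..b, Y₁'' u) →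
        Function.Periodic Y₂ (2 * π) →
        (∀ s, HasDerivAt Y₂ (Y₂' s) s) →
        Continuous Y₂' →
        LocallyIntegrable Y₂'' volume →
        (∀ a b : ℝ, a ≤ b → Y₂' b - Y₂' a = ∫ u in a..b, Y₂'' u) →
        -- both satisfy the well-stretched condition with constant `lam`
        (∀ s₁ s₂ : ℝ, |s₁ - s₂| ≤ π → lam * |s₁ - s₂| ≤ ‖Y₁ s₁ - Y₁ s₂‖) →
        (∀ s₁ s₂ : ℝ, |s₁ - s₂| ≤ π → lam * |s₁ - s₂| ≤ ‖Y₂ s₁ - Y₂ s₂‖) →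
        -- `‖Y₁‖_{Ḣ^{2+θ}(𝕋)}, ‖Y₂‖_{Ḣ^{2+θ}(𝕋)} < ∞`
        Summable (sobSummand (2 + θ) Y₁) →
        Summable (sobSummand (2 + θ) Y₂) →
        IntervalIntegrable (fun s => ‖gY Y₁ Y₁' s - gY Y₂ Y₂' s‖ ^ 2) volume (-π) π ∧
        normL2v (fun s => gY Y₁ Y₁' s - gY Y₂ Y₂' s)
          ≤ C / lam ^ 2 * (sobNorm (2 + θ) Y₁ + sobNorm (2 + θ) Y₂) ^ 2 *
              sobNorm (1 / 2 - β) (fun s => Y₁ s - Y₂ s) := by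
  have hb1 : β < θ := lt_of_lt_of_le hβ2 (min_le_left _ _)
  have hb2 : β < 1 / 2 := lt_of_lt_of_le hβ2 (min_le_right _ _)
  obtain ⟨ε, hε0, hε1, hεθ, hεh⟩ : ∃ ε : ℝ, 0 < ε ∧ ε ≤ 1 ∧ β + ε < θ ∧ β + ε < 1 / 2 := by
    have a1 := min_le_left θ (1 / 2)
    have a2 := min_le_right θ (1 / 2)
    exact ⟨(min θ (1 / 2) - β) / 2, by linarith, by linarith, by linarith, by linarith⟩
  set δ : ℝ := 1 / 2 - β - ε with hδ
  have hde : δ + ε = 1 / 2 - β := by rw [hδ]; ring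
  have hCT := CT_pos θ δ ε
  have hpi := pi_pos
  refine ⟨(4 * π)⁻¹ * √(128 * CT θ δ ε), by positivity, ?_⟩
  intro Y₁ Y₁' Y₁'' Y₂ Y₂' Y₂'' l hl p1 d1 k1 _ _ p2 d2 k2 _ _ w1 w2 s1 s2
  have mkc : ∀ {Y Y' : ℝ → E2}, Function.Periodic Y (2 * π) → (∀ s, HasDerivAt Y (Y' s) s) →
      Continuous Y' → Crv (fun s => Phi (Y s)) (fun s => Phi (Y' s)) := by
    intro Y Y' p d k
    refine ⟨fun s => by simp only [p s], fun s => ?_, Phi.continuous.comp k⟩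
    exact (Phi.toContinuousLinearEquiv.toContinuousLinearMap.hasFDerivAt.comp_hasDerivAt s (d s))
  have mkw : ∀ {Y : ℝ → E2}, (∀ s₁ s₂ : ℝ, |s₁ - s₂| ≤ π → l * |s₁ - s₂| ≤ ‖Y s₁ - Y s₂‖) →
      WS (fun s => Phi (Y s)) l := by
    intro Y w a b hab
    simp only
    rw [← map_sub, Phi.norm_map]
    exact w a b hab
  have hY1 : Continuous Y₁ := continuous_iff_continuousAt.2 fun s => (d1 s).continuousAt
  have hY2 : Continuous Y₂ := continuous_iff_continuousAt.2 fun s => (d2 s).continuousAt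
  obtain ⟨t1, E1⟩ := En_le_sob hY1 s1
  obtain ⟨t2, E2'⟩ := En_le_sob hY2 s2
  have s3 : Summable (sobSummand (1 / 2 - β) (fun s => Y₁ s - Y₂ s)) :=
    sob_sub_summable (by linarith) hY1 hY2 s1 s2
  obtain ⟨t3, E3⟩ := En_le_sob (Y := fun s => Y₁ s - Y₂ s) (hY1.sub hY2) s3
  simp only [map_sub] at t3 E3
  set N1 := sobNorm (2 + θ) Y₁ with hN1
  set N2 := sobNorm (2 + θ) Y₂ with hN2
  set D := sobNorm (1 / 2 - β) (fun s => Y₁ s - Y₂ s) with hD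
  have n1 : 0 ≤ N1 := Real.sqrt_nonneg _
  have n2 : 0 ≤ N2 := Real.sqrt_nonneg _
  have nD : 0 ≤ D := Real.sqrt_nonneg _
  have q2 : √2 ^ 2 = (2 : ℝ) := Real.sq_sqrt (by norm_num)
  have hK : 0 ≤ √2 * (N1 + N2) := by positivity
  have hK1 : 2 * N1 ^ 2 ≤ (√2 * (N1 + N2)) ^ 2 := by
    rw [mul_pow, q2]; gcongr; linarith
  have hK2 : 2 * N2 ^ 2 ≤ (√2 * (N1 + N2)) ^ 2 := by
    rw [mul_pow, q2]; gcongr; linarith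
  rw [← hde] at t3 E3
  obtain ⟨cont, est⟩ := main_est hK hl (mkc p1 d1 k1) (mkc p2 d2 k2) (mkw w1) (mkw w2)
    (by linarith : (0 : ℝ) ≤ θ) (by linarith : 0 ≤ δ) (by linarith) hε0 hε1 t1 t2
    (E1.trans hK1) (E2'.trans hK2) t3
  have key : (fun s => ‖gY Y₁ Y₁' s - gY Y₂ Y₂' s‖ ^ 2) = fun s => ((4 * π)⁻¹) ^ 2 *
      ‖(∫ τ in (-π)..π, FI (fun s => Phi (Y₁ s)) (fun s => Phi (Y₁' s)) s τ) -
        ∫ τ in (-π)..π, FI (fun s => Phi (Y₂ s)) (fun s => Phi (Y₂' s)) s τ‖ ^ 2 := by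
    ext s
    rw [← Phi.norm_map, map_sub, gY_eq hl (mkw w1), gY_eq hl (mkw w2), ← smul_sub, norm_smul,
      mul_pow, Real.norm_of_nonneg (by positivity)]
  refine ⟨?_, ?_⟩
  · rw [key]
    exact (continuous_const.mul cont).intervalIntegrable _ _
  · unfold normL2v
    rw [key, intervalIntegral.integral_const_mul]
    refine Real.sqrt_le_iff.2 ⟨by positivity, ?_⟩
    have hq4 : (√2 * (N1 + N2)) ^ 4 = 4 * (N1 + N2) ^ 4 := by
      rw [mul_pow, show (√2) ^ 4 = (√2 ^ 2) ^ 2 by ring, q2]; norm_num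
    rw [hq4] at est
    have est2 := est.trans (mul_le_mul_of_nonneg_left E3 (by positivity))
    refine (mul_le_mul_of_nonneg_left est2 (by positivity)).trans (le_of_eq ?_)
    have hs : √(128 * CT θ δ ε) ^ 2 = 128 * CT θ δ ε := Real.sq_sqrt (by positivity)
    have : ((4 * π)⁻¹ * √(128 * CT θ δ ε) / l ^ 2 * (N1 + N2) ^ 2 * D) ^ 2 =
      (4 * π)⁻¹ ^ 2 * √(128 * CT θ δ ε) ^ 2 / l ^ 4 * (N1 + N2) ^ 4 * D ^ 2 := by
      field_simp
    rw [this, hs]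
    field_simp
    ring
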